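/- arXiv:1001.0436 — 2 statements merged into one kernel-verified Lean document; each statement's English description precedes it below -/
import Mathlib

section
/- Fix numbers of jobs n and machines m, values v : Fin n → ℝ with v ≥ 0, machine-dependent sizes s : Fin n × Fin m → ℝ with s > 0, and capacities c : Fin m → ℝ with c ≥ 0. There exists a map A from edge sets E ⊆ Fin n × Fin m to finitely supported probability distributions over assignments x : Fin n → Option (Fin m) such that: (i) every assignment in the support of A(E) is feasible for VIGAP[E]; (ii) A is truthful in expectation: for every E, every job i, and every set E'_i of pairs with first coordinate i, letting E' = (E \ E_i) ∪ E'_i, the expected value of v(i)·[x assigns i to some machine j with (i,j) ∈ E] under A(E) is at least that under A(E'); and (iii) for every E, 4 · E_{x ~ A(E)}[welfare(x)] ≥ the maximum welfare of a feasible assignment for VIGAP[E]. That is, there is a 4-approximate mechanism without money for the value-invariant generalized assignment problem that is truthful-in-expectation in the private graph model. -/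
/-- Feasibility of an assignment for VIGAP[E] (machine-dependent sizes). -/
def VIGAPFeasible {n m : ℕ} (s : Fin n × Fin m → ℝ) (c : Fin m → ℝ)
    (E : Finset (Fin n × Fin m)) (x : Fin n → Option (Fin m)) : Prop :=
  (∀ i j, x i = some j → (i, j) ∈ E) ∧
    ∀ j, ∑ i ∈ Finset.univ.filter (fun i => x i = some j), s (i, j) ≤ c j

/-- Welfare of an assignment in VIGAP: each assigned job contributes its value. -/
def VIGAPWelfare {n m : ℕ} (v : Fin n → ℝ) (x : Fin n → Option (Fin m)) : ℝ :=
  ∑ i ∈ Finset.univ.filter (fun i => x i ≠ none), v i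

/-!
Whatever is reported, process the edges whose job fits on its machine in one fixed order, that of
decreasing value per unit of size, and raise the mass of each reported edge until the job has mass
`1` or the machine is full. A machine that stopped an edge is full of jobs at least as dense, so
charging `vᵢ · massᵢ` to the jobs, and to the machines the value they collect per unit of capacity,
is a solution of the dual linear program that costs twice the value of the greedy solution.

No misreport helps: a job that is fully assigned under the truth has nothing to gain. Otherwise, run
the greedy algorithm on the truth and on the misreport of job `i` in parallel. What `i` has lost by
lying always dominates a nonnegative potential, which measures how far the other jobs lag behind and
the machines are ahead in the truthful run.

The greedy solution is rounded by splitting each machine into unit slots filled in order of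
decreasing size, writing the resulting fractional matching of jobs to slots as a mixture of
matchings by Birkhoff's theorem, and keeping, with probability `1 / 2` each, either the first slot
of every machine or all the later ones. Every job then gets exactly half of its mass on each edge,
so truthfulness survives and the approximation factor doubles to `4`.
-/

namespace VIGAP

open Finset

variable {I J R : Type*}

section Totals

/-- The total mass `∑ⱼ xᵢⱼ` that the fractional assignment `x` gives to a job. -/
def mass [Fintype J] [AddCommMonoid R] (x : I × J → R) (i : I) : R :=
  ∑ j, x (i, j)

/-- The mass that `x` gives to a job on the edges of `E` only. With `E` the true edge set, this is
what a job values, whatever edges it reports. -/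
def massOn [Fintype J] [DecidableEq I] [DecidableEq J] [AddCommMonoid R] (E : Finset (I × J))
    (x : I × J → R) (i : I) : R :=
  ∑ j with (i, j) ∈ E, x (i, j)

/-- The `w`-weighted total `∑ᵢ wᵢⱼ xᵢⱼ` that `x` puts on a machine. The weights are the sizes
(capacity used) or the values (value collected). -/
def load [Fintype I] [NonUnitalNonAssocSemiring R] (w x : I × J → R) (j : J) : R :=
  ∑ i, w (i, j) * x (i, j)

theorem mass_add_single [Fintype J] [DecidableEq I] [DecidableEq J] [AddCommMonoid R]
    (x : I × J → R) (e : I × J) (d : R) :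
    mass (x + Pi.single e d) = mass x + Pi.single e.1 d := by
  obtain ⟨k, l⟩ := e
  ext i
  by_cases h : i = k <;> simp [mass, sum_add_distrib, Pi.single_apply, h]

theorem massOn_add_single [Fintype J] [DecidableEq I] [DecidableEq J] [AddCommMonoid R]
    (E : Finset (I × J)) (x : I × J → R) (e : I × J) (d : R) :
    massOn E (x + Pi.single e d) = massOn E x + Pi.single e.1 (if e ∈ E then d else 0) := by
  obtain ⟨k, l⟩ := e
  ext i
  by_cases h : i = k <;> simp [massOn, sum_add_distrib, Pi.single_apply, h]

theorem load_add_single [Fintype I] [DecidableEq I] [DecidableEq J] [NonUnitalNonAssocSemiring R]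
    (w x : I × J → R) (e : I × J) (d : R) :
    load w (x + Pi.single e d) = load w x + Pi.single e.2 (w e * d) := by
  obtain ⟨k, l⟩ := e
  ext j
  by_cases h : j = l <;> simp [load, mul_add, sum_add_distrib, Pi.single_apply, h]

theorem mass_smul [Fintype J] [Semiring R] (r : R) (x : I × J → R) : mass (r • x) = r • mass x := by
  ext i
  simp [mass, mul_sum]

theorem massOn_smul [Fintype J] [DecidableEq I] [DecidableEq J] [Semiring R] (r : R)
    (E : Finset (I × J)) (x : I × J → R) :
    massOn E (r • x) = r • massOn E x := by
  ext i
  simp [massOn, mul_sum]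

theorem massOn_eq_mass [Fintype J] [DecidableEq I] [DecidableEq J] [AddCommMonoid R]
    {E : Finset (I × J)} {x : I × J → R} (hx : ∀ e, x e ≠ 0 → e ∈ E) :
    massOn E x = mass x :=
  funext fun i ↦ sum_filter_of_ne fun j _ ↦ hx (i, j)

theorem sum_load_comp_fst [Fintype I] [Fintype J] [NonUnitalNonAssocSemiring R] (v : I → R)
    (x : I × J → R) : ∑ j, load (fun e ↦ v e.1) x j = ∑ i, v i * mass x i := by
  simp only [load, mass, mul_sum]
  exact sum_comm

theorem mass_mono [Fintype J] [AddCommMonoid R] [PartialOrder R] [IsOrderedAddMonoid R]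
    {x y : I × J → R} (h : x ≤ y) : mass x ≤ mass y :=
  fun _ ↦ sum_le_sum fun _ _ ↦ h _

theorem massOn_le_mass [Fintype J] [DecidableEq I] [DecidableEq J] [AddCommMonoid R]
    [PartialOrder R] [IsOrderedAddMonoid R] (E : Finset (I × J)) {x : I × J → R} (hx : 0 ≤ x) :
    massOn E x ≤ mass x :=
  fun _ ↦ sum_le_sum_of_subset_of_nonneg (filter_subset _ _) fun _ _ _ ↦ hx _

theorem load_mono [Fintype I] [Semiring R] [PartialOrder R] [IsOrderedRing R]
    {w x y : I × J → R} (hw : 0 ≤ w) (h : x ≤ y) : load w x ≤ load w y :=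
  fun _ ↦ sum_le_sum fun _ _ ↦ mul_le_mul_of_nonneg_left (h _) (hw _)

theorem load_nonneg [Fintype I] [Semiring R] [PartialOrder R] [IsOrderedRing R]
    {w x : I × J → R} (hw : 0 ≤ w) (hx : 0 ≤ x) : 0 ≤ load w x :=
  fun _ ↦ sum_nonneg fun _ _ ↦ mul_nonneg (hw _) (hx _)

end Totals

/-- Fractional assignments: nonnegative, giving each job mass at most `1` and respecting the
capacities `c`. They relax the feasible assignments, except that an edge may carry a job too large
for its machine. -/
structure IsFractional [Fintype I] [Fintype J] [Semiring R] [PartialOrder R] (s : I × J → R)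
    (c : J → R) (x : I × J → R) : Prop where
  nonneg : 0 ≤ x
  mass_le_one : ∀ i, mass x i ≤ 1
  load_le : ∀ j, load s x j ≤ c j

theorem isFractional_zero [Fintype I] [Fintype J] [Semiring R] [PartialOrder R]
    [ZeroLEOneClass R] (s : I × J → R) {c : J → R} (hc : 0 ≤ c) : IsFractional s c 0 where
  nonneg := le_rfl
  mass_le_one i := by simp [mass]
  load_le j := by simpa [load] using hc j

section Greedy

variable [Fintype I] [Fintype J] [DecidableEq I] [DecidableEq J] [Field R] [LinearOrder R]

/-- The largest mass the greedy algorithm can add to `e` when its current solution is `x`: it stops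
when the job has mass `1` or the machine is full. Edges outside the report `E` get nothing. -/
def increment (s : I × J → R) (c : J → R) (E : Finset (I × J)) (x : I × J → R) (e : I × J) : R :=
  if e ∈ E then min (1 - mass x e.1) ((c e.2 - load s x e.2) / s e) else 0

/-- One step of the greedy algorithm: raise `x e` as much as possible. -/
def greedyStep (s : I × J → R) (c : J → R) (E : Finset (I × J)) (x : I × J → R) (e : I × J) :
    I × J → R :=
  x + Pi.single e (increment s c E x e)

/-- The greedy algorithm for the report `E`, started at `x` and processing the edges of `l` from
left to right. -/
def greedy (s : I × J → R) (c : J → R) (E : Finset (I × J)) (x : I × J → R) (l : List (I × J)) :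
    I × J → R :=
  l.foldl (greedyStep s c E) x

variable {s : I × J → R} {c : J → R} {E E' : Finset (I × J)} {x : I × J → R} {e : I × J}

theorem increment_of_notMem (he : e ∉ E) : increment s c E x e = 0 := if_neg he

theorem mass_or_load_saturated (hse : s e ≠ 0) (he : e ∈ E) :
    mass x e.1 + increment s c E x e = 1 ∨ load s x e.2 + s e * increment s c E x e = c e.2 := by
  rw [increment, if_pos he]
  rcases min_choice (1 - mass x e.1) ((c e.2 - load s x e.2) / s e) with h | h <;> rw [h]
  · exact .inl (add_sub_cancel _ _)
  · exact .inr (by rw [mul_div_cancel₀ _ hse, add_sub_cancel])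

theorem mem_of_greedy_ne_zero (l : List (I × J)) (h : greedy s c E x l e ≠ 0) :
    x e ≠ 0 ∨ e ∈ l ∧ e ∈ E := by
  induction l generalizing x with
  | nil => exact .inl h
  | cons f l ih =>
    rcases ih h with h | ⟨hl, hE⟩
    · by_cases hef : e = f
      · subst hef
        by_cases he : e ∈ E
        · exact .inr ⟨List.mem_cons_self, he⟩
        · exact .inl (by simpa [greedyStep, increment_of_notMem he] using h)
      · exact .inl (by simpa [greedyStep, hef] using h)
    · exact .inr ⟨List.mem_cons_of_mem _ hl, hE⟩

variable [IsStrictOrderedRing R]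

theorem increment_nonneg (hs : ∀ e, 0 < s e) (hx : IsFractional s c x) :
    0 ≤ increment s c E x e := by
  unfold increment
  split_ifs
  · exact le_min (sub_nonneg.2 (hx.mass_le_one _))
      (div_nonneg (sub_nonneg.2 (hx.load_le _)) (hs e).le)
  · exact le_rfl

theorem mass_add_increment_le_one (hx : IsFractional s c x) :
    mass x e.1 + increment s c E x e ≤ 1 := by
  unfold increment
  split_ifs
  · exact le_sub_iff_add_le'.1 (min_le_left _ _)
  · simpa using hx.mass_le_one e.1

theorem load_add_mul_increment_le (hs : ∀ e, 0 < s e) (hx : IsFractional s c x) :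
    load s x e.2 + s e * increment s c E x e ≤ c e.2 := by
  unfold increment
  split_ifs
  · exact le_sub_iff_add_le'.1 ((le_div_iff₀' (hs e)).1 (min_le_right _ _))
  · simpa using hx.load_le e.2

theorem le_greedyStep (hs : ∀ e, 0 < s e) (hx : IsFractional s c x) :
    x ≤ greedyStep s c E x e :=
  le_add_of_nonneg_right (Pi.single_nonneg.2 (increment_nonneg hs hx))

theorem IsFractional.greedyStep (hs : ∀ e, 0 < s e) (hx : IsFractional s c x) :
    IsFractional s c (greedyStep s c E x e) where
  nonneg := hx.nonneg.trans (le_greedyStep hs hx)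
  mass_le_one i := by
    rw [VIGAP.greedyStep, mass_add_single, Pi.add_apply]
    rcases eq_or_ne i e.1 with rfl | hi
    · simpa using mass_add_increment_le_one hx
    · simpa [hi] using hx.mass_le_one i
  load_le j := by
    rw [VIGAP.greedyStep, load_add_single, Pi.add_apply]
    rcases eq_or_ne j e.2 with rfl | hj
    · simpa using load_add_mul_increment_le hs hx
    · simpa [hj] using hx.load_le j

theorem IsFractional.greedy (hs : ∀ e, 0 < s e) (hx : IsFractional s c x) (l : List (I × J)) :
    IsFractional s c (greedy s c E x l) := by
  induction l generalizing x with
  | nil => exact hx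
  | cons e _ ih => exact ih (hx.greedyStep hs)

theorem le_greedy (hs : ∀ e, 0 < s e) (hx : IsFractional s c x) (l : List (I × J)) :
    x ≤ greedy s c E x l := by
  induction l generalizing x with
  | nil => exact le_rfl
  | cons e l ih => exact (le_greedyStep hs hx).trans (ih (hx.greedyStep hs))

end Greedy

section Covering

/-- The value of an edge's job per unit of capacity it uses. -/
def density [Div R] (v : I → R) (s : I × J → R) (e : I × J) : R := v e.1 / s e

theorem density_mul_size [DivisionRing R] (v : I → R) {s : I × J → R} {e : I × J} (hse : s e ≠ 0) :
    density v s e * s e = v e.1 :=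
  div_mul_cancel₀ _ hse

variable [Field R] [LinearOrder R] [IsStrictOrderedRing R] {v : I → R} {s : I × J → R}
  {c : J → R} {x : I × J → R} {e : I × J} {l : List (I × J)}

theorem density_nonneg (hv : 0 ≤ v) (hs : ∀ e, 0 < s e) : 0 ≤ density v s e :=
  div_nonneg (hv _) (hs e).le

variable [Fintype I]

theorem mul_load_le_load_of_le_density {r : R} (hs : ∀ e, 0 < s e) (hx : 0 ≤ x)
    (hr : ∀ e, x e ≠ 0 → r ≤ density v s e) (j : J) :
    r * load s x j ≤ load (fun e ↦ v e.1) x j := by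
  rw [load, mul_sum]
  refine sum_le_sum fun i _ ↦ ?_
  rcases eq_or_ne (x (i, j)) 0 with h | h
  · simp [h]
  · calc r * (s (i, j) * x (i, j)) = r * s (i, j) * x (i, j) := (mul_assoc _ _ _).symm
      _ ≤ density v s (i, j) * s (i, j) * x (i, j) :=
        mul_le_mul_of_nonneg_right (mul_le_mul_of_nonneg_right (hr _ h) (hs _).le) (hx _)
      _ = v i * x (i, j) := by rw [density_mul_size _ (hs _).ne']

variable [Fintype J] [DecidableEq I] [DecidableEq J] {E : Finset (I × J)}

theorem mass_eq_one_or_density_mul_le_load (hv : 0 ≤ v) (hs : ∀ e, 0 < s e) (hc : 0 ≤ c)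
    (hl : l.Pairwise fun e f ↦ density v s f ≤ density v s e) (hel : e ∈ l) (heE : e ∈ E) :
    mass (greedy s c E 0 l) e.1 = 1 ∨
      density v s e * c e.2 ≤ load (fun f ↦ v f.1) (greedy s c E 0 l) e.2 := by
  obtain ⟨l₁, l₂, rfl⟩ := List.append_of_mem hel
  set x := greedy s c E 0 l₁ with hxdef
  have hx : IsFractional s c x := (isFractional_zero s hc).greedy hs l₁
  have hy : IsFractional s c (greedyStep s c E x e) := hx.greedyStep hs
  have hz : greedy s c E 0 (l₁ ++ e :: l₂) = greedy s c E (greedyStep s c E x e) l₂ := by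
    simp [greedy, hxdef]
  have hle : greedyStep s c E x e ≤ greedy s c E (greedyStep s c E x e) l₂ := le_greedy hs hy l₂
  rw [hz]
  rcases mass_or_load_saturated (c := c) (x := x) (hs e).ne' heE with hsat | hsat
  · refine .inl (((hy.greedy hs l₂).mass_le_one _).antisymm ?_)
    calc 1 = mass (greedyStep s c E x e) e.1 := by simp [greedyStep, mass_add_single, hsat]
      _ ≤ _ := mass_mono hle _
  · have hdense (f : I × J) (hf : greedyStep s c E x e f ≠ 0) : density v s e ≤ density v s f := by
      rcases eq_or_ne f e with rfl | hfe
      · exact le_rfl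
      · have hfx : x f ≠ 0 := by simpa [greedyStep, hfe] using hf
        have hfl : f ∈ l₁ := ((mem_of_greedy_ne_zero l₁ hfx).resolve_left (by simp)).1
        exact (List.pairwise_append.1 hl).2.2 f hfl e List.mem_cons_self
    refine .inr ?_
    calc density v s e * c e.2 = density v s e * load s (greedyStep s c E x e) e.2 := by
          simp [greedyStep, load_add_single, hsat]
      _ ≤ load (fun f ↦ v f.1) (greedyStep s c E x e) e.2 :=
        mul_load_le_load_of_le_density hs hy.nonneg hdense _
      _ ≤ _ := load_mono (fun f ↦ hv f.1) hle _

end Covering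

section PosPart

variable [AddCommGroup R] [LinearOrder R] [IsOrderedAddMonoid R]

theorem posPart_add_le_add_posPart (a b : R) : (a + b)⁺ ≤ a⁺ + b⁺ :=
  sup_le (add_le_add (le_posPart a) (le_posPart b))
    (add_nonneg (posPart_nonneg a) (posPart_nonneg b))

theorem posPart_posPart_sub_add_posPart_negPart_sub (a b : R) :
    (a⁺ - b⁺)⁺ + (b⁻ - a⁻)⁺ = (a - b)⁺ := by
  rcases le_total a b with h | h
  · rw [posPart_of_nonpos (sub_nonpos.2 (posPart_mono h)),
      posPart_of_nonpos (sub_nonpos.2 (negPart_anti h)), posPart_of_nonpos (sub_nonpos.2 h),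
      add_zero]
  · rw [posPart_of_nonneg (sub_nonneg.2 (posPart_mono h)),
      posPart_of_nonneg (sub_nonneg.2 (negPart_anti h)), posPart_of_nonneg (sub_nonneg.2 h)]
    nth_rewrite 3 [← posPart_sub_negPart a, ← posPart_sub_negPart b]
    abel

-- Removing `min a b` from both `a` and `b` leaves `(a - b)⁺` and `(a - b)⁻`.
theorem posPart_sub_min_contract (a b a' b' : R) :
    ((a - min a b) - (a' - min a' b'))⁺ + ((b' - min a' b') - (b - min a b))⁺ ≤
      (a - a')⁺ + (b' - b)⁺ := by
  have left (x y : R) : x - min x y = (x - y)⁺ := by rw [inf_eq_sub_posPart_sub, sub_sub_cancel]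
  have right (x y : R) : y - min x y = (x - y)⁻ := by
    rw [min_comm, left, ← neg_sub x y, posPart_neg]
  rw [left, left, right, right, posPart_posPart_sub_add_posPart_negPart_sub]
  calc (a - b - (a' - b'))⁺ = ((a - a') + (b' - b))⁺ := by congr 1; abel
    _ ≤ (a - a')⁺ + (b' - b)⁺ := posPart_add_le_add_posPart _ _

end PosPart

section Potential

/-- The potential comparing the greedy solution `A` of a truthful report with the solution `B` of a
misreport: the `w`-weighted shortfall in mass of the jobs under `A` plus `ρ` times the excess load
of the machines under `A`. -/
def potential [Fintype I] [Fintype J] [Ring R] [LinearOrder R] (w : I → R) (s : I × J → R) (ρ : R)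
    (A B : I × J → R) : R :=
  ∑ k, w k * (mass B k - mass A k)⁺ + ρ * ∑ j, (load s A j - load s B j)⁺

variable [Fintype I] [Fintype J] [Ring R] [LinearOrder R] {w : I → R} {s : I × J → R} {ρ : R}
  {A B : I × J → R}

theorem potential_self : potential w s ρ A A = 0 := by simp [potential]

theorem potential_add_single [DecidableEq I] [DecidableEq J] {e : I × J} (a b : R) :
    potential w s ρ (A + Pi.single e a) (B + Pi.single e b) = potential w s ρ A B +
      (w e.1 * ((mass B e.1 + b - (mass A e.1 + a))⁺ - (mass B e.1 - mass A e.1)⁺) +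
        ρ * ((load s A e.2 + s e * a - (load s B e.2 + s e * b))⁺ -
          (load s A e.2 - load s B e.2)⁺)) := by
  rw [← sub_eq_iff_eq_add', potential, potential, add_sub_add_comm, ← mul_sub, ← sum_sub_distrib,
    ← sum_sub_distrib, Fintype.sum_eq_single e.1, Fintype.sum_eq_single e.2]
  · simp [mass_add_single, load_add_single, mul_sub]
  · intro j hj
    simp [load_add_single, hj]
  · intro k hk
    simp [mass_add_single, hk]

variable [IsStrictOrderedRing R]

theorem potential_nonneg (hw : 0 ≤ w) (hρ : 0 ≤ ρ) : 0 ≤ potential w s ρ A B :=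
  add_nonneg (sum_nonneg fun k _ ↦ mul_nonneg (hw k) (posPart_nonneg _))
    (mul_nonneg hρ (sum_nonneg fun _ _ ↦ posPart_nonneg _))

theorem potential_mono_density {ρ' : R} (h : ρ ≤ ρ') :
    potential w s ρ A B ≤ potential w s ρ' A B :=
  add_le_add_right (mul_le_mul_of_nonneg_right h (sum_nonneg fun _ _ ↦ posPart_nonneg _)) _

end Potential

section Truthfulness

variable [Fintype I] [Fintype J] [DecidableEq I] [DecidableEq J] [Field R] [LinearOrder R]
  [IsStrictOrderedRing R] {v w : I → R} {s : I × J → R} {c : J → R} {ρ : R} {A B : I × J → R}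
  {E E' : Finset (I × J)} {e : I × J} {i : I}

theorem potential_greedyStep_le_of_weight_eq (hse : 0 < s e) (hρ : 0 ≤ ρ) (hw : w e.1 = ρ * s e)
    (hE : e ∈ E' ↔ e ∈ E) :
    potential w s ρ (greedyStep s c E A e) (greedyStep s c E' B e) ≤ potential w s ρ A B := by
  by_cases he : e ∈ E
  swap
  · simp [greedyStep, increment_of_notMem he, increment_of_notMem (mt hE.1 he)]
  set a := increment s c E A e with ha
  set b := increment s c E' B e with hb
  rw [increment, if_pos he] at ha
  rw [increment, if_pos (hE.2 he)] at hb
  have size_mul_posPart (t : R) : s e * t⁺ = (s e * t)⁺ := by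
    rw [posPart_def, posPart_def, mul_max_of_nonneg _ _ hse.le, mul_zero]
  have slack (L : R) : s e * ((c e.2 - L) / s e) = c e.2 - L := mul_div_cancel₀ _ hse.ne'
  have contract : s e * (mass B e.1 + b - (mass A e.1 + a))⁺ +
      (load s A e.2 + s e * a - (load s B e.2 + s e * b))⁺ ≤
      s e * (mass B e.1 - mass A e.1)⁺ + (load s A e.2 - load s B e.2)⁺ := by
    have h := mul_le_mul_of_nonneg_left (posPart_sub_min_contract (1 - mass A e.1)
      ((c e.2 - load s A e.2) / s e) (1 - mass B e.1) ((c e.2 - load s B e.2) / s e)) hse.le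
    rw [← ha, ← hb, mul_add, mul_add, size_mul_posPart (_ / _ - b - _),
      size_mul_posPart (_ / _ - _)] at h
    simp only [mul_sub, slack] at h
    convert h using 3 <;> ring_nf
  rw [greedyStep, greedyStep, potential_add_single, hw]
  linarith [mul_le_mul_of_nonneg_left contract hρ]

theorem potential_greedyStep_le_of_weight_eq_zero (hs : ∀ e, 0 < s e) (hρ : 0 ≤ ρ)
    (hw : w e.1 = 0) (hB : IsFractional s c B)
    (hlt : mass (greedyStep s c E A e) e.1 < 1) :
    potential w s ρ (greedyStep s c E A e) (greedyStep s c E' B e) ≤ potential w s ρ A B +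
      ρ * s e * if e ∈ E then increment s c E A e - increment s c E' B e else 0 := by
  rw [greedyStep, greedyStep, potential_add_single, hw, zero_mul, zero_add, mul_assoc]
  have hfit : load s B e.2 + s e * increment s c E' B e ≤ c e.2 := load_add_mul_increment_le hs hB
  refine add_le_add_right ?_ _
  refine mul_le_mul_of_nonneg_left ?_ hρ
  rw [sub_le_iff_le_add]
  split_ifs with he
  · have hfull : load s A e.2 + s e * increment s c E A e = c e.2 :=
      (mass_or_load_saturated (hs e).ne' he).resolve_left
        (by simpa [greedyStep, mass_add_single] using hlt.ne)
    rw [posPart_of_nonneg (by linarith)]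
    linarith [le_posPart (load s A e.2 - load s B e.2)]
  · rw [increment_of_notMem he, mul_zero, add_zero, zero_add]
    refine posPart_mono (sub_le_sub_left (le_add_of_nonneg_right ?_) _)
    exact mul_nonneg (hs e).le (increment_nonneg hs hB)

-- A job short of mass `1` has had every machine it is truly adjacent to filled up, which is what
-- pays for the gain `B` makes.
theorem potential_greedyStep_le_gain (hv : 0 ≤ v) (hs : ∀ e, 0 < s e) (hB : IsFractional s c B)
    (hE : e.1 ≠ i → (e ∈ E' ↔ e ∈ E)) (hlt : mass (greedyStep s c E A e) i < 1)
    (h : potential (Function.update v i 0) s (density v s e) A B ≤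
      v i * (massOn E A i - massOn E B i)) :
    potential (Function.update v i 0) s (density v s e)
        (greedyStep s c E A e) (greedyStep s c E' B e) ≤
      v i * (massOn E (greedyStep s c E A e) i - massOn E (greedyStep s c E' B e) i) := by
  have hρ : 0 ≤ density v s e := density_nonneg hv hs
  have hvs : density v s e * s e = v e.1 := density_mul_size v (hs e).ne'
  rcases eq_or_ne e.1 i with rfl | hi
  · refine (potential_greedyStep_le_of_weight_eq_zero hs hρ (by simp) hB hlt).trans ?_
    rw [hvs, greedyStep, greedyStep, massOn_add_single, massOn_add_single]
    refine (add_le_add_left h _).trans_eq ?_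
    by_cases he : e ∈ E <;> simp only [he, if_true, if_false, Pi.add_apply, Pi.single_eq_same] <;>
      ring
  · refine (potential_greedyStep_le_of_weight_eq (hs e) hρ (by simp [hi, hvs]) (hE hi)).trans ?_
    simpa [greedyStep, massOn_add_single, hi.symm] using h

theorem massOn_greedy_le_of_mass_lt_one (hv : 0 ≤ v) (hs : ∀ e, 0 < s e) {l : List (I × J)}
    (hl : l.Pairwise fun e f ↦ density v s f ≤ density v s e)
    (hE : ∀ e : I × J, e.1 ≠ i → (e ∈ E' ↔ e ∈ E)) (hA : IsFractional s c A)
    (hB : IsFractional s c B) (hρ : 0 ≤ ρ) (hρl : ∀ e ∈ l, density v s e ≤ ρ)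
    (h : potential (Function.update v i 0) s ρ A B ≤ v i * (massOn E A i - massOn E B i))
    (hlt : mass (greedy s c E A l) i < 1) :
    v i * massOn E (greedy s c E' B l) i ≤ v i * massOn E (greedy s c E A l) i := by
  induction l generalizing A B ρ with
  | nil =>
    have hw : 0 ≤ Function.update v i 0 := le_update_iff.2 ⟨le_rfl, fun k _ ↦ hv k⟩
    rw [← sub_nonneg, ← mul_sub]
    exact (potential_nonneg hw hρ).trans h
  | cons e l ih =>
    obtain ⟨hel, hl⟩ := List.pairwise_cons.1 hl
    have hA' : IsFractional s c (greedyStep s c E A e) := hA.greedyStep hs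
    refine ih hl hA' (hB.greedyStep hs) (density_nonneg hv hs) hel ?_ hlt
    exact potential_greedyStep_le_gain hv hs hB (hE e)
      ((mass_mono (le_greedy hs hA' l) i).trans_lt hlt)
      ((potential_mono_density (hρl e List.mem_cons_self)).trans h)

theorem massOn_greedy_le (hv : 0 ≤ v) (hs : ∀ e, 0 < s e) (hc : 0 ≤ c) {l : List (I × J)}
    (hl : l.Pairwise fun e f ↦ density v s f ≤ density v s e)
    (hE : ∀ e : I × J, e.1 ≠ i → (e ∈ E' ↔ e ∈ E)) :
    v i * massOn E (greedy s c E' 0 l) i ≤ v i * massOn E (greedy s c E 0 l) i := by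
  have h0 : IsFractional s c 0 := isFractional_zero s hc
  rcases ((h0.greedy (E := E) hs l).mass_le_one i).lt_or_eq with hlt | hone
  · exact massOn_greedy_le_of_mass_lt_one hv hs hl hE h0 h0
      (sum_nonneg fun e _ ↦ density_nonneg hv hs)
      (fun e _ ↦ single_le_sum (f := density v s) (fun e _ ↦ density_nonneg hv hs) (mem_univ e))
      (by simp [potential_self]) hlt
  · have hmem (e : I × J) (he : greedy s c E 0 l e ≠ 0) : e ∈ E :=
      ((mem_of_greedy_ne_zero l he).resolve_left (by simp)).2
    have h0' : IsFractional s c (greedy s c E' 0 l) := h0.greedy hs l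
    refine mul_le_mul_of_nonneg_left ?_ (hv i)
    calc massOn E (greedy s c E' 0 l) i ≤ mass (greedy s c E' 0 l) i :=
          massOn_le_mass E h0'.nonneg i
      _ ≤ 1 := h0'.mass_le_one i
      _ = massOn E (greedy s c E 0 l) i := by rw [massOn_eq_mass hmem, hone]

end Truthfulness

section Slots

/-- A splitting `y` of the masses `x i` of the jobs on one machine into unit slots `0, …, N` such
that a job present in some slot is no larger than the `y`-average size in the slot before it. -/
structure IsSlotting [Fintype I] [Semiring R] [PartialOrder R] {N : ℕ} (s x : I → R)
    (y : I → Fin (N + 1) → R) : Prop where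
  nonneg : 0 ≤ y
  sum_slots : ∀ i, ∑ b, y i b = x i
  sum_jobs_le_one : ∀ b, ∑ i, y i b ≤ 1
  size_le : ∀ i (b : Fin N), y i b.succ ≠ 0 → s i ≤ ∑ k, s k * y k b.castSucc

theorem IsSlotting.comp_equiv {I' : Type*} [Fintype I] [Fintype I'] [Semiring R] [PartialOrder R]
    {N : ℕ} (σ : I' ≃ I) {s x : I → R} {y : I' → Fin (N + 1) → R}
    (hy : IsSlotting (s ∘ σ) (x ∘ σ) y) :
    IsSlotting s x (y ∘ σ.symm) where
  nonneg i := hy.nonneg (σ.symm i)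
  sum_slots i := by simpa using hy.sum_slots (σ.symm i)
  sum_jobs_le_one b := (σ.symm.sum_comp fun k ↦ y k b).trans_le (hy.sum_jobs_le_one b)
  size_le i b hib := by
    rw [← σ.sum_comp]
    simpa using hy.size_le (σ.symm i) b hib

theorem sum_succ_sub_castSucc [AddCommGroup R] {n : ℕ} (f : Fin (n + 1) → R) :
    ∑ i : Fin n, (f i.succ - f i.castSucc) = f (Fin.last n) - f 0 := by
  have h : f 0 + ∑ i : Fin n, f i.succ = ∑ i : Fin n, f i.castSucc + f (Fin.last n) := by
    rw [← Fin.sum_univ_succ, Fin.sum_univ_castSucc]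
  rw [sum_sub_distrib, sub_eq_sub_iff_add_eq_add, add_comm, h, add_comm]

theorem partialSum_succ_sub_castSucc [AddCommGroup R] {n : ℕ} (x : Fin n → R) (i : Fin n) :
    Fin.partialSum x i.succ - Fin.partialSum x i.castSucc = x i :=
  sub_eq_of_eq_add' (Fin.partialSum_succ x i)

theorem partialSum_last [AddCommGroup R] {n : ℕ} (x : Fin n → R) :
    Fin.partialSum x (Fin.last n) = ∑ i, x i := by
  rw [← Fintype.sum_congr _ _ (partialSum_succ_sub_castSucc x), sum_succ_sub_castSucc,
    Fin.partialSum_zero, sub_zero]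

theorem partialSum_mono [AddCommGroup R] [PartialOrder R] [IsOrderedAddMonoid R] {n : ℕ}
    {x : Fin n → R} (hx : 0 ≤ x) : Monotone (Fin.partialSum x) :=
  Fin.monotone_iff_le_succ.2 fun i ↦
    sub_nonneg.1 ((hx i).trans_eq (partialSum_succ_sub_castSucc x i).symm)

variable [Ring R] [LinearOrder R]

/-- The part of `[b, b + 1]` that lies below `t`: how much of slot `b` is filled once jobs of total
mass `t` have been poured, in order, into unit slots. -/
def slotFill (b t : R) : R := max 0 (min 1 (t - b))

/-- The mass that job `i` puts into slot `b` when the masses `x` are poured, in order, into unit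
slots. -/
def slotting {n : ℕ} (x : Fin n → R) (i : Fin n) (b : ℕ) : R :=
  slotFill (b : R) (Fin.partialSum x i.succ) - slotFill (b : R) (Fin.partialSum x i.castSucc)

theorem slotFill_nonneg (b t : R) : 0 ≤ slotFill b t := le_max_left _ _

theorem sum_slotting_jobs {n : ℕ} (x : Fin n → R) (b : ℕ) :
    ∑ i, slotting x i b = slotFill (b : R) (∑ i, x i) - slotFill (b : R) 0 := by
  simpa [slotting, partialSum_last] using
    sum_succ_sub_castSucc fun i ↦ slotFill (b : R) (Fin.partialSum x i)

variable [IsStrictOrderedRing R]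

theorem slotFill_le_one (b t : R) : slotFill b t ≤ 1 := max_le zero_le_one (min_le_left _ _)

theorem slotFill_mono (b : R) : Monotone (slotFill b) :=
  fun _ _ h ↦ max_le_max_left _ (min_le_min_left _ (sub_le_sub_right h _))

theorem slotFill_of_le {b t : R} (h : t ≤ b) : slotFill b t = 0 :=
  max_eq_left ((min_le_right _ _).trans (sub_nonpos.2 h))

theorem slotFill_of_add_one_le {b t : R} (h : b + 1 ≤ t) : slotFill b t = 1 := by
  rw [slotFill, min_eq_left (le_sub_iff_add_le'.2 h), max_eq_right zero_le_one]

theorem sum_slotFill {t : R} (ht : 0 ≤ t) (N : ℕ) : ∑ b : Fin N, slotFill (b : R) t = min t N := by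
  induction N with
  | zero => simpa using ht
  | succ N ih =>
    simp only [Fin.sum_univ_castSucc, Fin.val_castSucc, Fin.val_last, ih, Nat.cast_succ]
    rcases le_total t N with h | h
    · rw [slotFill_of_le h, add_zero, min_eq_left h, min_eq_left (h.trans (by simp))]
    · rw [slotFill, min_eq_right h, max_eq_right (le_min zero_le_one (sub_nonneg.2 h)),
        ← min_add_add_left, add_sub_cancel, min_comm]

section SortedJobs

variable {n N : ℕ} {s x : Fin n → R}

theorem slotting_nonneg (hx : 0 ≤ x) (i : Fin n) (b : ℕ) : 0 ≤ slotting x i b :=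
  sub_nonneg.2 (slotFill_mono _ (partialSum_mono hx i.castSucc_le_succ))

theorem sum_slotting_slots (hx : 0 ≤ x) (hN : ∑ i, x i ≤ N) (i : Fin n) :
    ∑ b : Fin N, slotting x i b = x i := by
  have hfull (k : Fin (n + 1)) :
      ∑ b : Fin N, slotFill (b : R) (Fin.partialSum x k) = Fin.partialSum x k := by
    have h0 : 0 ≤ Fin.partialSum x k :=
      (Fin.partialSum_zero x).symm.trans_le (partialSum_mono hx (Fin.zero_le k))
    have hk : Fin.partialSum x k ≤ N :=
      (partialSum_mono hx (Fin.le_last k)).trans ((partialSum_last x).trans_le hN)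
    rw [sum_slotFill h0, min_eq_left hk]
  simp only [slotting, sum_sub_distrib, hfull, partialSum_succ_sub_castSucc]

-- Job `i` reaches slot `b + 1` only once slot `b` is full, so slot `b` holds mass `1` of jobs that
-- come no later than `i`.
theorem le_sum_mul_slotting (hs : Antitone s) (hx : 0 ≤ x) {i : Fin n} {b : ℕ}
    (hib : slotting x i (b + 1) ≠ 0) : s i ≤ ∑ k, s k * slotting x k b := by
  have hreach : (b : R) + 1 ≤ Fin.partialSum x i.succ := by
    by_contra! h
    have h' : Fin.partialSum x i.succ ≤ (b + 1 : ℕ) := by exact_mod_cast h.le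
    rw [slotting, slotFill_of_le h',
      slotFill_of_le ((partialSum_mono hx i.castSucc_le_succ).trans h'), sub_zero] at hib
    exact hib rfl
  have hfull (k : Fin (n + 1)) (hk : i.succ ≤ k) : slotFill (b : R) (Fin.partialSum x k) = 1 :=
    slotFill_of_add_one_le (hreach.trans (partialSum_mono hx hk))
  have hone : ∑ k, slotting x k b = 1 := by
    rw [sum_slotting_jobs, ← partialSum_last, hfull _ (Fin.le_last _),
      slotFill_of_le (Nat.cast_nonneg b), sub_zero]
  calc s i = ∑ k, s i * slotting x k b := by rw [← mul_sum, hone, mul_one]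
    _ ≤ ∑ k, s k * slotting x k b := sum_le_sum fun k _ ↦ ?_
  rcases le_or_gt k i with hki | hik
  · exact mul_le_mul_of_nonneg_right (hs hki) (slotting_nonneg hx k b)
  · have hzero : slotting x k b = 0 := by
      rw [slotting, hfull k.succ (Fin.succ_le_succ_iff.2 hik.le),
        hfull k.castSucc (Fin.succ_le_castSucc_iff.2 hik), sub_self]
    simp [hzero]

theorem isSlotting_slotting (hs : Antitone s) (hx : 0 ≤ x) (hN : ∑ i, x i ≤ (N + 1 : ℕ)) :
    IsSlotting s x fun i (b : Fin (N + 1)) ↦ slotting x i b where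
  nonneg i b := slotting_nonneg hx i b
  sum_slots := sum_slotting_slots hx hN
  sum_jobs_le_one b := by
    rw [sum_slotting_jobs]
    exact (sub_le_self _ (slotFill_nonneg _ _)).trans (slotFill_le_one _ _)
  size_le i b := le_sum_mul_slotting hs hx

end SortedJobs

theorem exists_isSlotting [Fintype I] (s : I → R) {x : I → R} (hx : 0 ≤ x) {N : ℕ}
    (hN : ∑ i, x i ≤ (N + 1 : ℕ)) : ∃ y : I → Fin (N + 1) → R, IsSlotting s x y := by
  set e := (Fintype.equivFin I).symm
  set σ : Fin (Fintype.card I) ≃ I := (Tuple.sort (OrderDual.toDual ∘ s ∘ e)).trans e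
  have hs : Antitone (s ∘ σ) := Tuple.monotone_sort (OrderDual.toDual ∘ s ∘ e)
  exact ⟨_, (isSlotting_slotting hs (fun i ↦ hx (σ i))
    ((σ.sum_comp x).trans_le hN)).comp_equiv σ⟩

end Slots

section Lotteries

section Pushforward

variable {α β : Type*} [Semiring R]

theorem sum_filter_linearMap [Fintype α] [Fintype β] (f : α → β) (w : α → R) (P : β → Prop)
    [DecidablePred P] :
    ∑ b with P b, FunOnFinite.linearMap R R f w b = ∑ a with P (f a), w a := by
  classical
  simp only [FunOnFinite.linearMap_apply_apply]
  exact (sum_fiberwise_eq_sum_filter univ {b | P b} f w).trans (by simp only [mem_filter_univ])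

theorem exists_of_linearMap_ne_zero [Finite α] [Finite β] {f : α → β} {w : α → R} {b : β}
    (h : FunOnFinite.linearMap R R f w b ≠ 0) : ∃ a, w a ≠ 0 ∧ f a = b := by
  classical
  have := Fintype.ofFinite α
  rw [FunOnFinite.linearMap_apply_apply] at h
  obtain ⟨a, ha, hwa⟩ := exists_ne_zero_of_sum_ne_zero h
  exact ⟨a, hwa, (mem_filter.1 ha).2⟩

end Pushforward

/-- Matchings: no two jobs are assigned to the same machine, or to the same slot of one. -/
def IsMatching (a : I → Option J) : Prop :=
  ∀ ⦃i k q⦄, a i = some q → a k = some q → i = k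

variable [Fintype I] [Fintype J] [DecidableEq I] [DecidableEq J]

/-- The probability that the lottery `p` over assignments assigns job `e.1` to machine `e.2`. -/
def marginal [AddCommMonoid R] (p : (I → Option J) → R) (e : I × J) : R :=
  ∑ a with a e.1 = some e.2, p a

theorem marginal_smul_add_smul [Semiring R] (r t : R) (p q : (I → Option J) → R) :
    marginal (r • p + t • q) = r • marginal p + t • marginal q := by
  ext e
  simp [marginal, sum_add_distrib, mul_sum]

theorem marginal_ne_zero [AddCommMonoid R] [PartialOrder R] [IsOrderedAddMonoid R]
    {p : (I → Option J) → R} (hp : 0 ≤ p) {a : I → Option J} (hpa : p a ≠ 0) {i : I} {j : J}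
    (haij : a i = some j) : marginal p (i, j) ≠ 0 := fun h ↦
  hpa ((sum_eq_zero_iff_of_nonneg fun a _ ↦ hp a).1 h a (mem_filter.2 ⟨mem_univ a, haij⟩))

theorem diagonal_one_sub_nonneg {α : Type*} [DecidableEq α] [Ring R] [PartialOrder R]
    [IsOrderedAddMonoid R] {d : α → R} (hd : ∀ a, d a ≤ 1)
    (a b : α) : 0 ≤ Matrix.diagonal (fun a ↦ 1 - d a) a b := by
  rw [Matrix.diagonal_apply]
  split_ifs
  exacts [sub_nonneg.2 (hd a), le_rfl]

theorem fromBlocks_mem_doublyStochastic [Ring R] [PartialOrder R] [IsOrderedRing R]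
    {x : I × J → R} (hx : IsFractional 1 1 x) :
    Matrix.fromBlocks (Matrix.diagonal fun i ↦ 1 - mass x i) (Matrix.of fun i j ↦ x (i, j))
      (Matrix.of fun j i ↦ x (i, j)) (Matrix.diagonal fun j ↦ 1 - load 1 x j) ∈
    doublyStochastic R (I ⊕ J) := by
  refine mem_doublyStochastic_iff_sum.2 ⟨?_, ?_, ?_⟩
  · rintro (i | j) (i' | j')
    exacts [diagonal_one_sub_nonneg hx.mass_le_one i i', hx.nonneg _, hx.nonneg _,
      diagonal_one_sub_nonneg hx.load_le j j']
  · rintro (i | j) <;> simp [Matrix.diagonal_apply, mass, load]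
  · rintro (i | j) <;> simp [Matrix.diagonal_apply, mass, load]

theorem exists_matching_lottery [Field R] [LinearOrder R] [IsStrictOrderedRing R]
    {x : I × J → R} (hx : IsFractional 1 1 x) :
    ∃ p ∈ stdSimplex R (I → Option J),
      (∀ a, p a ≠ 0 → IsMatching a) ∧ marginal p = x := by
  obtain ⟨w, hw0, hw1, hw⟩ :=
    exists_eq_sum_perm_of_mem_doublyStochastic (fromBlocks_mem_doublyStochastic hx)
  refine ⟨FunOnFinite.linearMap R R (fun σ i ↦ (σ (.inl i)).getRight?) w,
    stdSimplex.image_linearMap _ ⟨w, ⟨hw0, hw1⟩, rfl⟩, fun a ha i k j hi hk ↦ ?_, ?_⟩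
  · obtain ⟨σ, -, rfl⟩ := exists_of_linearMap_ne_zero ha
    rw [Sum.getRight?_eq_some_iff] at hi hk
    exact Sum.inl_injective (σ.injective (hi.trans hk.symm))
  · ext ⟨i, j⟩
    have hij := congrFun₂ hw (.inl i) (.inr j)
    simp only [Matrix.sum_apply, Matrix.smul_apply, Equiv.Perm.permMatrix, PEquiv.toMatrix_apply,
      Equiv.toPEquiv_apply, Option.mem_some_iff, smul_eq_mul, mul_ite, mul_one, mul_zero,
      Matrix.fromBlocks_apply₁₂, Matrix.of_apply] at hij
    rw [marginal, sum_filter_linearMap, ← hij, ← sum_filter]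
    simp only [Sum.getRight?_eq_some_iff]

end Lotteries

section Rounding

section KeepSlots

variable {B : Type*} [DecidableEq B] {T : Finset B}

/-- An assignment to slots of machines, with only the slots in `T` kept and slot numbers then
forgotten. -/
def keepSlots (T : Finset B) (o : Option (J × B)) : Option J :=
  (o.filter fun q ↦ q.2 ∈ T).map Prod.fst

theorem keepSlots_eq_some {o : Option (J × B)} {j : J} :
    keepSlots T o = some j ↔ ∃ b ∈ T, o = some (j, b) := by
  simp only [keepSlots, Option.map_eq_some_iff, Option.filter_eq_some_iff, decide_eq_true_eq]
  constructor
  · rintro ⟨⟨_, b⟩, ⟨ho, hb⟩, rfl⟩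
    exact ⟨b, hb, ho⟩
  · rintro ⟨b, hb, ho⟩
    exact ⟨(j, b), ⟨ho, hb⟩, rfl⟩

theorem sum_filter_keepSlots [AddCommMonoid R] [DecidableEq J] {α : Type*} [Fintype α]
    (g : α → Option (J × B)) (f : α → R) (j : J) :
    ∑ a with keepSlots T (g a) = some j, f a = ∑ b ∈ T, ∑ a with g a = some (j, b), f a := by
  classical
  have hunion : ({a | keepSlots T (g a) = some j} : Finset α) =
      T.biUnion fun b ↦ {a | g a = some (j, b)} := by
    ext a
    simp [keepSlots_eq_some]
  rw [hunion, sum_biUnion]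
  refine fun b _ b' _ hbb' ↦ disjoint_filter.2 fun a _ h h' ↦ hbb' ?_
  simpa using h.symm.trans h'

end KeepSlots

theorem sum_le_of_subsingleton [AddCommMonoid R] [Preorder R] {t : Finset I} {f : I → R} {r : R}
    (ht : (t : Set I).Subsingleton) (hr : 0 ≤ r) (hf : ∀ i ∈ t, f i ≤ r) : ∑ i ∈ t, f i ≤ r := by
  rcases t.eq_empty_or_nonempty with rfl | ⟨i, hi⟩
  · simpa using hr
  · rw [ht.eq_singleton_of_mem hi |> coe_eq_singleton.1, sum_singleton]
    exact hf i hi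

theorem IsMatching.sum_le [Fintype I] [DecidableEq J] [AddCommMonoid R] [Preorder R]
    {a : I → Option J} (ha : IsMatching a) {j : J} {f : I → R} {r : R} (hr : 0 ≤ r)
    (hf : ∀ i, a i = some j → f i ≤ r) : ∑ i with a i = some j, f i ≤ r :=
  sum_le_of_subsingleton (fun _ hi _ hk ↦ ha (mem_filter.1 hi).2 (mem_filter.1 hk).2) hr
    fun i hi ↦ hf i (mem_filter.1 hi).2

/-- Feasibility of an assignment for VIGAP[E], with arbitrary finite types of jobs and machines. -/
def IsFeasible [Fintype I] [DecidableEq J] [AddCommMonoid R] [LE R] (s : I × J → R) (c : J → R)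
    (E : Finset (I × J)) (a : I → Option J) : Prop :=
  (∀ i j, a i = some j → (i, j) ∈ E) ∧ ∀ j, ∑ i with a i = some j, s (i, j) ≤ c j

theorem IsFeasible.size_le [Fintype I] [DecidableEq J] [AddCommMonoid R] [PartialOrder R]
    [IsOrderedAddMonoid R] {s : I × J → R} {c : J → R} {E : Finset (I × J)} {z : I → Option J}
    (hs : 0 ≤ s) (hz : IsFeasible s c E z) {i : I} {j : J} (hij : z i = some j) : s (i, j) ≤ c j :=
  (single_le_sum (f := fun i ↦ s (i, j)) (fun i _ ↦ hs _) (by simpa using hij)).trans (hz.2 j)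

section Loads

variable [Fintype I] [DecidableEq J] [Semiring R] [PartialOrder R]
  {s x : I × J → R} {c : J → R} {N : ℕ} {y : J → I → Fin (N + 1) → R}
  {μ : I → Option (J × Fin (N + 1))}

theorem load_keepSlots_zero_le (hc : 0 ≤ c) (hμ : IsMatching μ)
    (hfit : ∀ i j b, μ i = some (j, b) → s (i, j) ≤ c j) (j : J) :
    ∑ i with keepSlots {0} (μ i) = some j, s (i, j) ≤ c j := by
  rw [sum_filter_keepSlots μ, sum_singleton]
  exact hμ.sum_le (hc j) fun i ↦ hfit i j 0

variable [IsOrderedRing R]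

theorem load_keepSlots_succ_le (hs : 0 ≤ s)
    (hy : ∀ j, IsSlotting (fun i ↦ s (i, j)) (fun i ↦ x (i, j)) (y j))
    (hμ : IsMatching μ)
    (hμy : ∀ i j b, μ i = some (j, b) → y j i b ≠ 0) (j : J) :
    ∑ i with keepSlots (univ.map (Fin.succEmb N)) (μ i) = some j, s (i, j) ≤ load s x j := by
  have havg (b : Fin (N + 1)) : 0 ≤ ∑ k, s (k, j) * y j k b :=
    sum_nonneg fun k _ ↦ mul_nonneg (hs _) ((hy j).nonneg _ _)
  rw [sum_filter_keepSlots μ, sum_map]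
  calc ∑ b : Fin N, ∑ i with μ i = some (j, b.succ), s (i, j)
      ≤ ∑ b : Fin N, ∑ k, s (k, j) * y j k b.castSucc := sum_le_sum fun b _ ↦
        hμ.sum_le (havg _) fun i hi ↦ (hy j).size_le i b (hμy i j b.succ hi)
    _ ≤ ∑ b, ∑ k, s (k, j) * y j k b := by
        rw [Fin.sum_univ_castSucc]
        exact le_add_of_nonneg_right (havg _)
    _ = load s x j := by
        rw [sum_comm]
        simp only [← mul_sum, (hy j).sum_slots, load]

end Loads

variable [Fintype I] [Fintype J] [DecidableEq I] [DecidableEq J]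

/-- The lottery over assignments that draws an assignment to slots from `w` and keeps only the slots
in `T`. -/
noncomputable def keepSlotsLottery {B : Type*} [Fintype B] [DecidableEq B] [Semiring R]
    (T : Finset B) (w : (I → Option (J × B)) → R) : (I → Option J) → R :=
  FunOnFinite.linearMap R R (fun μ i ↦ keepSlots T (μ i)) w

theorem marginal_keepSlotsLottery {B : Type*} [Fintype B] [DecidableEq B] [Semiring R]
    (T : Finset B) (w : (I → Option (J × B)) → R) (e : I × J) :
    marginal (keepSlotsLottery T w) e = ∑ b ∈ T, marginal w (e.1, (e.2, b)) := by
  rw [marginal, keepSlotsLottery, sum_filter_linearMap]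
  exact sum_filter_keepSlots (fun μ ↦ μ e.1) w e.2

variable [Field R] [LinearOrder R] [IsStrictOrderedRing R] {s x : I × J → R} {c : J → R}
  {E : Finset (I × J)}

theorem exists_slotting_lottery (hx : IsFractional s c x) :
    ∃ (y : J → I → Fin (Fintype.card I + 1) → R)
      (w : (I → Option (J × Fin (Fintype.card I + 1))) → R),
      (∀ j, IsSlotting (fun i ↦ s (i, j)) (fun i ↦ x (i, j)) (y j)) ∧
      w ∈ stdSimplex R (I → Option (J × Fin (Fintype.card I + 1))) ∧
      (∀ μ, w μ ≠ 0 → IsMatching μ) ∧ ∀ i j b, marginal w (i, (j, b)) = y j i b := by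
  have hle_one (e : I × J) : x e ≤ 1 :=
    (single_le_sum (fun j _ ↦ hx.nonneg (e.1, j)) (mem_univ e.2)).trans (hx.mass_le_one e.1)
  have hsum (j : J) : ∑ i, x (i, j) ≤ (Fintype.card I + 1 : ℕ) := by
    calc ∑ i, x (i, j) ≤ ∑ _i : I, 1 := sum_le_sum fun i _ ↦ hle_one (i, j)
      _ ≤ (Fintype.card I + 1 : ℕ) := by simp
  choose y hy using fun j ↦ exists_isSlotting (fun i ↦ s (i, j)) (fun i ↦ hx.nonneg (i, j)) (hsum j)
  have hY : IsFractional 1 1 (fun e : I × (J × Fin (Fintype.card I + 1)) ↦ y e.2.1 e.1 e.2.2) :=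
    { nonneg := fun e ↦ (hy e.2.1).nonneg e.1 e.2.2
      mass_le_one := fun i ↦ by
        simpa only [mass, Fintype.sum_prod_type, (hy _).sum_slots] using hx.mass_le_one i
      load_le := fun q ↦ by simpa [load] using (hy q.1).sum_jobs_le_one q.2 }
  obtain ⟨w, hw, hmatch, hmarg⟩ := exists_matching_lottery hY
  exact ⟨y, w, hy, hw, hmatch, fun i j b ↦ congrFun hmarg (i, (j, b))⟩

-- In each machine keep, with probability `1 / 2` each, either slot `0` alone, whose single job fits
-- by itself, or the later slots, whose jobs fit into the load of the slots before them.
theorem exists_lottery_marginal_eq_half (hs : 0 ≤ s) (hc : 0 ≤ c) (hx : IsFractional s c x)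
    (hxE : ∀ e, x e ≠ 0 → e ∈ E ∧ s e ≤ c e.2) :
    ∃ p ∈ stdSimplex R (I → Option J),
      (∀ a, p a ≠ 0 → IsFeasible s c E a) ∧ marginal p = (2⁻¹ : R) • x := by
  obtain ⟨y, w, hy, hw, hmatch, hmarg⟩ := exists_slotting_lottery hx
  have hmem {μ} (hμ : w μ ≠ 0) {i j b} (h : μ i = some (j, b)) : y j i b ≠ 0 :=
    hmarg i j b ▸ marginal_ne_zero hw.1 hμ h
  have hedge {μ} (hμ : w μ ≠ 0) {i j b} (h : μ i = some (j, b)) : (i, j) ∈ E ∧ s (i, j) ≤ c j := by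
    refine hxE (i, j) fun h0 ↦ hmem hμ h ?_
    rw [← (hy j).sum_slots, sum_eq_zero_iff_of_nonneg fun b _ ↦ (hy j).nonneg i b] at h0
    exact h0 b (mem_univ b)
  have hfeas {T : Finset (Fin (Fintype.card I + 1))} (hload : ∀ μ, w μ ≠ 0 → ∀ j,
      ∑ i with keepSlots T (μ i) = some j, s (i, j) ≤ c j) (a : I → Option J)
      (ha : keepSlotsLottery T w a ≠ 0) : IsFeasible s c E a := by
    obtain ⟨μ, hμ, rfl⟩ := exists_of_linearMap_ne_zero ha
    refine ⟨fun i j hij ↦ ?_, hload μ hμ⟩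
    obtain ⟨b, -, hb⟩ := keepSlots_eq_some.1 hij
    exact (hedge hμ hb).1
  have hsimplex (T) : keepSlotsLottery T w ∈ stdSimplex R (I → Option J) :=
    stdSimplex.image_linearMap _ ⟨w, hw, rfl⟩
  set p₀ := keepSlotsLottery {0} w
  set p₁ := keepSlotsLottery (univ.map (Fin.succEmb _)) w
  have half : (0 : R) ≤ 2⁻¹ := by positivity
  refine ⟨(2⁻¹ : R) • p₀ + (2⁻¹ : R) • p₁, convex_stdSimplex R _ (hsimplex _) (hsimplex _)
    half half (by norm_num), fun a ha ↦ ?_, ?_⟩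
  · by_cases ha₀ : p₀ a = 0
    · refine hfeas (fun μ hμ j ↦ (load_keepSlots_succ_le hs hy (hmatch μ hμ)
        (fun i j b ↦ hmem hμ) j).trans (hx.load_le j)) a fun ha₁ ↦ ha ?_
      simp [p₁, ha₀, ha₁]
    · exact hfeas (fun μ hμ ↦ load_keepSlots_zero_le hc (hmatch μ hμ) fun i j b h ↦
        (hedge hμ h).2) a ha₀
  · rw [marginal_smul_add_smul, ← smul_add]
    congr 1
    ext ⟨i, j⟩
    rw [Pi.add_apply, marginal_keepSlotsLottery, marginal_keepSlotsLottery, sum_singleton, sum_map]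
    simpa only [hmarg, Fin.coe_succEmb, Fin.sum_univ_succ] using (hy j).sum_slots i

end Rounding

section Welfare

variable [Fintype I]

/-- The total value of the jobs that an assignment does not leave out. -/
def welfare [AddCommMonoid R] (v : I → R) (a : I → Option J) : R :=
  ∑ i with a i ≠ none, v i

theorem welfare_eq_sum [Fintype J] [DecidableEq J] [AddCommMonoid R] (v : I → R)
    (a : I → Option J) : welfare v a = ∑ i, ∑ j with a i = some j, v i := by
  rw [welfare, sum_filter]
  refine sum_congr rfl fun i _ ↦ ?_
  cases h : a i <;> simp [filter_eq]

variable [Fintype J] [DecidableEq I] [DecidableEq J]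

theorem sum_mul_sum_edges [CommSemiring R] (p : (I → Option J) → R) (v : I → R)
    (E : Finset (I × J)) (i : I) :
    ∑ a, p a * ∑ j with (i, j) ∈ E ∧ a i = some j, v i = v i * massOn E (marginal p) i := by
  simp only [massOn, marginal, mul_sum, sum_filter, ite_and]
  rw [sum_comm]
  refine sum_congr rfl fun j _ ↦ ?_
  split_ifs <;> simp [mul_sum, mul_comm]

theorem sum_mul_welfare [CommSemiring R] (p : (I → Option J) → R) (v : I → R) :
    ∑ a, p a * welfare v a = ∑ i, v i * mass (marginal p) i := by
  simp only [welfare_eq_sum, mass, marginal, mul_sum, sum_filter]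
  rw [sum_comm]
  refine sum_congr rfl fun i _ ↦ ?_
  rw [sum_comm]
  simp [mul_comm]

end Welfare

section Approximation

variable [Fintype I] [Fintype J] [DecidableEq J] {v : I → R} {s : I × J → R} {c : J → R}
  {E : Finset (I × J)} {z : I → Option J}

theorem IsFeasible.welfare_le_dual [Semiring R] [PartialOrder R] [IsOrderedRing R] {u : I → R}
    {π : J → R} (hs : 0 ≤ s) (hu : 0 ≤ u) (hπ : 0 ≤ π)
    (hdual : ∀ i j, (i, j) ∈ E → s (i, j) ≤ c j → v i ≤ u i + π j * s (i, j))
    (hz : IsFeasible s c E z) : welfare v z ≤ ∑ i, u i + ∑ j, π j * c j := by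
  have hjobs : welfare u z ≤ ∑ i, u i :=
    sum_le_sum_of_subset_of_nonneg (filter_subset _ _) fun i _ _ ↦ hu i
  calc welfare v z = ∑ i, ∑ j with z i = some j, v i := welfare_eq_sum v z
    _ ≤ ∑ i, ∑ j with z i = some j, (u i + π j * s (i, j)) :=
        sum_le_sum fun i _ ↦ sum_le_sum fun j hj ↦ by
          have hij : z i = some j := by simpa using hj
          exact hdual i j (hz.1 i j hij) (hz.size_le hs hij)
    _ = welfare u z + ∑ j, π j * ∑ i with z i = some j, s (i, j) := by
        simp only [sum_add_distrib, ← welfare_eq_sum, mul_sum]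
        exact congrArg _ (sum_comm' (by simp))
    _ ≤ ∑ i, u i + ∑ j, π j * c j :=
        add_le_add hjobs (sum_le_sum fun j _ ↦ mul_le_mul_of_nonneg_left (hz.2 j) (hπ j))

variable [DecidableEq I] [Field R] [LinearOrder R] [IsStrictOrderedRing R]

-- The dual solution is `uᵢ = vᵢ · massᵢ` and `πⱼ = Vⱼ / cⱼ`, where `Vⱼ` is the value collected on
-- machine `j`: both sums are the value of the greedy solution.
theorem IsFeasible.welfare_le_two_mul_greedy (hv : 0 ≤ v) (hs : ∀ e, 0 < s e) (hc : 0 ≤ c)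
    {l : List (I × J)} (hl : l.Pairwise fun e f ↦ density v s f ≤ density v s e)
    (hmem : ∀ e, s e ≤ c e.2 → e ∈ l) (hz : IsFeasible s c E z) :
    welfare v z ≤ 2 * ∑ i, v i * mass (greedy s c E 0 l) i := by
  set x := greedy s c E 0 l with hxdef
  have hx : 0 ≤ x := ((isFractional_zero s hc).greedy hs l).nonneg
  have hu : 0 ≤ fun i ↦ v i * mass x i := fun i ↦ mul_nonneg (hv i) (sum_nonneg fun j _ ↦ hx _)
  have hV : 0 ≤ load (fun e ↦ v e.1) x := load_nonneg (fun e ↦ hv e.1) hx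
  have hπ : 0 ≤ fun j ↦ load (fun e ↦ v e.1) x j / c j := fun j ↦ div_nonneg (hV j) (hc j)
  have hdual (i : I) (j : J) (hij : (i, j) ∈ E) (hfit : s (i, j) ≤ c j) :
      v i ≤ v i * mass x i + load (fun e ↦ v e.1) x j / c j * s (i, j) := by
    have hcj : 0 < c j := (hs _).trans_le hfit
    rcases mass_eq_one_or_density_mul_le_load hv hs hc hl (hmem (i, j) hfit) hij with h | h
    · rw [hxdef, h, mul_one]
      exact le_add_of_nonneg_right (mul_nonneg (hπ j) (hs _).le)
    · refine le_add_of_nonneg_of_le (hu i) ?_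
      calc v i = density v s (i, j) * s (i, j) := (density_mul_size v (hs (i, j)).ne').symm
        _ ≤ load (fun e ↦ v e.1) x j / c j * s (i, j) :=
          mul_le_mul_of_nonneg_right ((le_div_iff₀ hcj).2 h) (hs _).le
  calc welfare v z ≤ ∑ i, v i * mass x i + ∑ j, load (fun e ↦ v e.1) x j / c j * c j :=
        hz.welfare_le_dual (fun e ↦ (hs e).le) hu hπ hdual
    _ ≤ ∑ i, v i * mass x i + ∑ j, load (fun e ↦ v e.1) x j := by
        gcongr with j
        rw [div_mul_eq_mul_div, mul_div_assoc]
        exact mul_le_of_le_one_right (hV j) (div_self_le_one (c j))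
    _ = 2 * ∑ i, v i * mass x i := by rw [sum_load_comp_fst, two_mul]

end Approximation

theorem exists_list_pairwise_le [LinearOrder R] {α : Type*} (S : Finset α) (f : α → R) :
    ∃ l : List α, (∀ a, a ∈ l ↔ a ∈ S) ∧ l.Pairwise fun a b ↦ f b ≤ f a := by
  have : Std.Total fun a b ↦ f b ≤ f a := ⟨fun a b ↦ le_total (f b) (f a)⟩
  have : IsTrans α fun a b ↦ f b ≤ f a := ⟨fun a b c hab hbc ↦ hbc.trans hab⟩
  classical
  exact ⟨S.toList.insertionSort fun a b ↦ f b ≤ f a, by simp,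
    List.pairwise_insertionSort _ _⟩

end VIGAP

theorem stmt16_general {I J R : Type*} [Fintype I] [Fintype J] [DecidableEq I] [DecidableEq J]
    [Field R] [LinearOrder R] [IsStrictOrderedRing R] (v : I → R) (s : I × J → R) (c : J → R)
    (hv : ∀ i, 0 ≤ v i) (hs : ∀ e, 0 < s e) (hc : ∀ j, 0 ≤ c j) :
    ∃ A : Finset (I × J) → (I → Option J) → R,
      (∀ E a, 0 ≤ A E a) ∧
      (∀ E, ∑ a, A E a = 1) ∧
      (∀ E a, A E a ≠ 0 → VIGAP.IsFeasible s c E a) ∧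
      (∀ (E Ei' : Finset (I × J)) (i : I), (∀ e ∈ Ei', e.1 = i) →
        ∑ a, A ((E \ E.filter (fun e ↦ e.1 = i)) ∪ Ei') a *
            ∑ j with (i, j) ∈ E ∧ a i = some j, v i ≤
          ∑ a, A E a * ∑ j with (i, j) ∈ E ∧ a i = some j, v i) ∧
      (∀ E z, VIGAP.IsFeasible s c E z →
        VIGAP.welfare v z ≤ 4 * ∑ a, A E a * VIGAP.welfare v a) := by
  obtain ⟨l, hmem, hl⟩ := VIGAP.exists_list_pairwise_le ({e | s e ≤ c e.2} : Finset (I × J))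
    (VIGAP.density v s)
  simp only [Finset.mem_filter_univ] at hmem
  have hround (E : Finset (I × J)) := VIGAP.exists_lottery_marginal_eq_half (E := E)
    (fun e ↦ (hs e).le) hc ((VIGAP.isFractional_zero s hc).greedy hs l) fun e he ↦ by
      obtain ⟨hel, heE⟩ := (VIGAP.mem_of_greedy_ne_zero l he).resolve_left (by simp)
      exact ⟨heE, (hmem e).1 hel⟩
  choose A hA hfeas hmarg using hround
  refine ⟨A, fun E ↦ (hA E).1, fun E ↦ (hA E).2, hfeas, fun E Ei' i hi ↦ ?_, fun E z hz ↦ ?_⟩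
  · rw [VIGAP.sum_mul_sum_edges, VIGAP.sum_mul_sum_edges, hmarg, hmarg, VIGAP.massOn_smul,
      VIGAP.massOn_smul, Pi.smul_apply, Pi.smul_apply, mul_smul_comm, mul_smul_comm]
    refine smul_le_smul_of_nonneg_left (VIGAP.massOn_greedy_le hv hs hc hl fun e he ↦ ?_)
      (by positivity)
    simp [he, mt (hi e) he]
  · simp only [VIGAP.sum_mul_welfare, hmarg, VIGAP.mass_smul, Pi.smul_apply, smul_eq_mul,
      mul_left_comm _ (2⁻¹ : R), ← Finset.mul_sum]
    linarith [hz.welfare_le_two_mul_greedy hv hs hc hl fun e ↦ (hmem e).2]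

/-- There is a 4-approximate, truthful-in-expectation mechanism without money
for the value-invariant generalized assignment problem in the private graph model. -/
theorem stmt16 (n m : ℕ) (v : Fin n → ℝ) (s : Fin n × Fin m → ℝ) (c : Fin m → ℝ)
    (hv : ∀ i, 0 ≤ v i) (hs : ∀ p, 0 < s p) (hc : ∀ j, 0 ≤ c j) :
    ∃ A : Finset (Fin n × Fin m) → (Fin n → Option (Fin m)) → ℝ,
      (∀ E x, 0 ≤ A E x) ∧
      (∀ E, ∑ x : Fin n → Option (Fin m), A E x = 1) ∧
      (∀ E x, A E x ≠ 0 → VIGAPFeasible s c E x) ∧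
      (∀ (E Ei' : Finset (Fin n × Fin m)) (i : Fin n), (∀ e ∈ Ei', e.1 = i) →
        ∑ x : Fin n → Option (Fin m),
            A ((E \ E.filter (fun e => e.1 = i)) ∪ Ei') x *
              ∑ j ∈ Finset.univ.filter (fun j => (i, j) ∈ E ∧ x i = some j), v i
          ≤ ∑ x : Fin n → Option (Fin m),
              A E x * ∑ j ∈ Finset.univ.filter (fun j => (i, j) ∈ E ∧ x i = some j), v i) ∧
      (∀ E z, VIGAPFeasible s c E z →
        VIGAPWelfare v z ≤ 4 * ∑ x : Fin n → Option (Fin m), A E x * VIGAPWelfare v x) :=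
  stmt16_general v s c hv hs hc
end

section
/- There is a constant C > 0 such that the following holds. For all numbers of jobs n ≥ 1 and machines m ≥ 1, all values v : Fin n × Fin m → ℝ with v ≥ 0, sizes s : Fin n × Fin m → ℝ with s > 0, and capacities c : Fin m → ℝ with c ≥ 0, there exists a map A from edge sets E ⊆ Fin n × Fin m to finitely supported probability distributions over assignments x : Fin n → Option (Fin m) such that: (i) every assignment in the support of A(E) is feasible for GAP[E]; (ii) A is truthful in expectation: for every E, every job i, and every set E'_i of pairs with first coordinate i, letting E' = (E \ E_i) ∪ E'_i, the expected value ∑_{j : (i,j) ∈ E, x(i) = some j} v(i,j) under A(E) is at least that under A(E'); and (iii) for every E, C·(1 + log n) · E_{x ~ A(E)}[welfare(x)] ≥ the maximum welfare of a feasible assignment for GAP[E]. That is, there is an O(log n)-approximate mechanism without money for the generalized assignment problem that is truthful-in-expectation in the private graph model. -/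
/-- Feasibility of an assignment for GAP[E] (machine-dependent sizes and values). -/
def GAPFeasible {n m : ℕ} (s : Fin n × Fin m → ℝ) (c : Fin m → ℝ)
    (E : Finset (Fin n × Fin m)) (x : Fin n → Option (Fin m)) : Prop :=
  (∀ i j, x i = some j → (i, j) ∈ E) ∧
    ∀ j, ∑ i ∈ Finset.univ.filter (fun i => x i = some j), s (i, j) ≤ c j

/-- Welfare of an assignment in GAP: assigned job `i` contributes `v (i,j)`. -/
def GAPWelfare {n m : ℕ} (v : Fin n × Fin m → ℝ) (x : Fin n → Option (Fin m)) : ℝ :=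
  ∑ i, ∑ j ∈ Finset.univ.filter (fun j => x i = some j), v (i, j)

/-! Round sizes down to powers of two: an edge is in class `k` if between `2 ^ k` and `2 ^ (k + 1)`
jobs of its size fill its machine, except that the last class `K = ⌈log₂ n⌉` collects all the
smaller sizes. On class `k`, let every machine accept at most `2 ^ k` jobs, whatever their exact
sizes, and scan the edges by decreasing value, accepting an edge whenever its job and a slot on its
machine are free. This is feasible. It is truthful because a job is first offered its most valuable
edges and what it is offered does not depend on its own report until it accepts. It is a
3-approximation on the class: an optimal edge is blocked either by a more valuable edge of its job
or by `2 ^ k` more valuable edges on its machine, which carries at most `2 * 2 ^ k` optimal edges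
(on class `K` because `n ≤ 2 ^ K`). Running the greedy procedure on a uniformly random class loses a
further factor of `K + 1`. -/

open Finset
open scoped BigOperators

theorem card_le_of_lt_mul_of_sum_le {α R : Type*} [Semiring R] [LinearOrder R]
    [IsStrictOrderedRing R] {S : Finset α} {f : α → R} {b : R} {N : ℕ} (hb : 0 ≤ b)
    (hf : ∀ a ∈ S, b < N * f a) (hsum : ∑ a ∈ S, f a ≤ b) : #S ≤ N := by
  by_contra! hN
  have hS : S.Nonempty := card_pos.1 (N.zero_le.trans_lt hN)
  have : #S * b < #S * b :=
    calc (#S : R) * b = ∑ _a ∈ S, b := by rw [sum_const, nsmul_eq_mul]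
      _ < ∑ a ∈ S, N * f a := sum_lt_sum_of_nonempty hS hf
      _ = N * ∑ a ∈ S, f a := (mul_sum _ _ _).symm
      _ ≤ N * b := mul_le_mul_of_nonneg_left hsum N.cast_nonneg
      _ ≤ #S * b := mul_le_mul_of_nonneg_right (Nat.cast_le.2 hN.le) hb
  exact this.false

theorem clog_two_add_one_le_log (n : ℕ) : (Nat.clog 2 n : ℝ) + 1 ≤ 2 * (1 + Real.log n) := by
  have hlog : 0 ≤ Real.log n := Real.log_natCast_nonneg n
  have hclog : (Nat.clog 2 n : ℝ) < Real.logb 2 n + 1 := by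
    rw [← Real.natCeil_logb_natCast]
    exact Nat.ceil_lt_add_one (div_nonneg hlog (Real.log_natCast_nonneg 2))
  have hlogb : Real.logb 2 n ≤ 2 * Real.log n := by
    rw [← Real.log_div_log, div_le_iff₀ (Real.log_pos one_lt_two)]
    nlinarith [Real.log_two_gt_d9]
  linarith

section Charging

variable {α β R : Type*} [AddCommMonoid R] [LinearOrder R] [IsOrderedCancelAddMonoid R]
  {v : α → R} {M A : Finset α} {r : ℕ}

theorem sum_le_nsmul_sum_of_le_card (hv : ∀ a, 0 ≤ v a) {q : ℕ}
    (hdom : ∀ e ∈ M, q ≤ #{a ∈ A | v e ≤ v a}) (hcard : #M ≤ r * q) :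
    ∑ e ∈ M, v e ≤ r • ∑ a ∈ A, v a := by
  have hA : 0 ≤ ∑ a ∈ A, v a := sum_nonneg fun a _ => hv a
  rcases eq_or_ne q 0 with rfl | hq
  · rw [card_eq_zero.1 (Nat.le_zero.1 hcard), sum_empty]
    exact nsmul_nonneg hA r
  have hcharge : ∀ e ∈ M, q • v e ≤ ∑ a ∈ A, v a := fun e he =>
    calc q • v e
        ≤ #{a ∈ A | v e ≤ v a} • v e := nsmul_le_nsmul_left (hv e) (hdom e he)
      _ ≤ ∑ a ∈ A with v e ≤ v a, v a := card_nsmul_le_sum _ _ _ fun a ha => (mem_filter.1 ha).2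
      _ ≤ ∑ a ∈ A, v a := sum_le_sum_of_subset_of_nonneg (filter_subset _ _) fun a _ _ => hv a
  refine le_of_nsmul_le_nsmul_right hq ?_
  calc q • ∑ e ∈ M, v e
      = ∑ e ∈ M, q • v e := smul_sum
    _ ≤ #M • ∑ a ∈ A, v a := sum_le_card_nsmul _ _ _ hcharge
    _ ≤ (r * q) • ∑ a ∈ A, v a := nsmul_le_nsmul_left hA hcard
    _ = q • r • ∑ a ∈ A, v a := by rw [mul_comm, mul_nsmul']

theorem sum_le_nsmul_sum_of_le_card_fiber [DecidableEq β] (hv : ∀ a, 0 ≤ v a) (f : α → β)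
    {q : β → ℕ} (hdom : ∀ e ∈ M, q (f e) ≤ #{a ∈ A | f a = f e ∧ v e ≤ v a})
    (hcard : ∀ b, #{e ∈ M | f e = b} ≤ r * q b) :
    ∑ e ∈ M, v e ≤ r • ∑ a ∈ A, v a := by
  have hfiber : ∀ b, ∑ e ∈ M with f e = b, v e ≤ r • ∑ a ∈ A with f a = b, v a := by
    refine fun b => sum_le_nsmul_sum_of_le_card hv (fun e he => ?_) (hcard b)
    obtain ⟨heM, rfl⟩ := mem_filter.1 he
    rw [filter_filter]
    exact hdom e heM
  calc ∑ e ∈ M, v e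
      = ∑ b ∈ M.image f, ∑ e ∈ M with f e = b, v e :=
        (sum_fiberwise_of_maps_to (fun e he => mem_image_of_mem f he) v).symm
    _ ≤ ∑ b ∈ M.image f, r • ∑ a ∈ A with f a = b, v a := sum_le_sum fun b _ => hfiber b
    _ = r • ∑ b ∈ M.image f, ∑ a ∈ A with f a = b, v a := smul_sum.symm
    _ ≤ r • ∑ a ∈ A, v a := nsmul_le_nsmul_right
        (sum_fiberwise_le_sum_of_sum_fiber_nonneg fun b _ => sum_nonneg fun a _ => hv a) r

end Charging

section DecreasingList

variable {α R : Type*} [LinearOrder R]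

/-- The elements of `S`, listed in some order of decreasing value of `v`. -/
noncomputable def decreasingList (v : α → R) (S : Finset α) : List α :=
  S.toList.mergeSort fun a b => v b ≤ v a

theorem pairwise_decreasingList (v : α → R) (S : Finset α) :
    (decreasingList v S).Pairwise fun a b => v b ≤ v a := by
  simpa [decreasingList] using S.toList.pairwise_mergeSort (le := fun a b => decide (v b ≤ v a))
    (fun a b c hab hbc => by simp only [decide_eq_true_eq] at *; exact hbc.trans hab)
    (fun a b => by simpa using le_total (v b) (v a))

@[simp]
theorem mem_decreasingList {v : α → R} {S : Finset α} {a : α} :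
    a ∈ decreasingList v S ↔ a ∈ S := by
  simp [decreasingList]

end DecreasingList

section UniformMixture

variable {ι Ω : Type*} [DecidableEq Ω]

/-- The distribution of `F k` for a uniformly random `k ∈ S`, as a function of the outcome. -/
noncomputable def uniformMixture (S : Finset ι) (F : ι → Ω) (x : Ω) : ℝ :=
  𝔼 k ∈ S, if F k = x then 1 else 0

theorem uniformMixture_nonneg (S : Finset ι) (F : ι → Ω) (x : Ω) : 0 ≤ uniformMixture S F x :=
  expect_nonneg fun _ _ => by positivity

theorem exists_eq_of_uniformMixture_ne_zero {S : Finset ι} {F : ι → Ω} {x : Ω}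
    (hx : uniformMixture S F x ≠ 0) : ∃ k ∈ S, F k = x := by
  obtain ⟨k, hk, hne⟩ := exists_ne_zero_of_expect_ne_zero hx
  exact ⟨k, hk, by_contra fun h => hne (if_neg h)⟩

theorem sum_uniformMixture_mul [Fintype Ω] (S : Finset ι) (F : ι → Ω) (f : Ω → ℝ) :
    ∑ x, uniformMixture S F x * f x = 𝔼 k ∈ S, f (F k) := by
  simp only [uniformMixture, expect_mul, ite_mul, one_mul, zero_mul]
  rw [← expect_sum_comm]
  simp

theorem sum_uniformMixture [Fintype Ω] {S : Finset ι} (hS : S.Nonempty) (F : ι → Ω) :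
    ∑ x, uniformMixture S F x = 1 := by
  simpa [hS] using sum_uniformMixture_mul S F 1

end UniformMixture

section Assignment

variable {ι κ R : Type*} [Fintype ι] [Fintype κ] [DecidableEq κ]

/-- The edges used by an assignment `x`, that is, the graph of the partial function `x`. -/
def assignedEdges (x : ι → Option κ) : Finset (ι × κ) :=
  {e | x e.1 = some e.2}

@[simp]
theorem mem_assignedEdges {x : ι → Option κ} {e : ι × κ} :
    e ∈ assignedEdges x ↔ x e.1 = some e.2 := by
  simp [assignedEdges]

theorem injOn_fst_assignedEdges (x : ι → Option κ) :
    Set.InjOn Prod.fst (assignedEdges x : Set (ι × κ)) := by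
  intro a ha b hb hab
  simp only [mem_coe, mem_assignedEdges] at ha hb
  exact Prod.ext hab (Option.some.inj (by rw [← ha, ← hb, hab]))

theorem assignedEdges_update [DecidableEq ι] {x : ι → Option κ} {e : ι × κ} (he : x e.1 = none) :
    assignedEdges (Function.update x e.1 (some e.2)) = insert e (assignedEdges x) := by
  ext a
  by_cases ha : a.1 = e.1
  · simp [ha, he, Prod.ext_iff, eq_comm]
  · simp [ha, Prod.ext_iff]

theorem sum_assignedEdges [AddCommMonoid R] (x : ι → Option κ) (f : ι × κ → R) :
    ∑ e ∈ assignedEdges x, f e = ∑ i, ∑ j with x i = some j, f (i, j) := by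
  simp only [assignedEdges, sum_filter, Fintype.sum_prod_type]

theorem sum_assignedEdges_filter_snd [AddCommMonoid R] (x : ι → Option κ) (f : ι × κ → R) (j : κ) :
    ∑ e ∈ assignedEdges x with e.2 = j, f e = ∑ i with x i = some j, f (i, j) := by
  rw [sum_filter, sum_assignedEdges, sum_filter]
  refine sum_congr rfl fun i _ => ?_
  simp

end Assignment

section Utility

variable {ι κ R : Type*} [Fintype κ] [DecidableEq ι] [DecidableEq κ]

/-- The value that job `i`, whose true set of edges is `E`, derives from the assignment `x`. -/
def utility [AddCommMonoid R] (v : ι × κ → R) (E : Finset (ι × κ)) (x : ι → Option κ) (i : ι) : R :=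
  ∑ j with (i, j) ∈ E ∧ x i = some j, v (i, j)

theorem utility_of_eq_none [AddCommMonoid R] (v : ι × κ → R) (E : Finset (ι × κ))
    {x : ι → Option κ} {i : ι} (hi : x i = none) : utility v E x i = 0 := by
  simp [utility, hi]

variable [Fintype ι]

theorem utility_of_mem_assignedEdges [AddCommMonoid R] (v : ι × κ → R) (E : Finset (ι × κ))
    {x : ι → Option κ} {e : ι × κ} (he : e ∈ assignedEdges x) :
    utility v E x e.1 = if e ∈ E then v e else 0 := by
  rw [mem_assignedEdges] at he
  simp only [utility, he, Option.some.injEq, and_comm, sum_filter, ite_and]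
  simp

theorem utility_le [AddCommMonoid R] [Preorder R] {v : ι × κ → R} {E : Finset (ι × κ)}
    {x : ι → Option κ} {i : ι} {w : R} (hw : 0 ≤ w)
    (h : ∀ e ∈ assignedEdges x, e.1 = i → v e ≤ w) : utility v E x i ≤ w := by
  rcases hi : x i with _ | j
  · rwa [utility_of_eq_none v E hi]
  · have hj : (i, j) ∈ assignedEdges x := mem_assignedEdges.2 hi
    rw [utility_of_mem_assignedEdges v E hj]
    split_ifs
    exacts [h _ hj rfl, hw]

end Utility

section Greedy

variable {ι κ R : Type*} [Fintype ι] [Fintype κ] [DecidableEq ι] [DecidableEq κ]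
  {q : κ → ℕ} {E E' : Finset (ι × κ)} {L : List (ι × κ)} {x : ι → Option κ} {e a : ι × κ}

/-- One step of the greedy procedure with `q j` slots on machine `j`: the edge `e` is added to the
assignment `x` if it is reported (`e ∈ E`), its job is unassigned and its machine has a
free slot. -/
def greedyStep (q : κ → ℕ) (E : Finset (ι × κ)) (x : ι → Option κ) (e : ι × κ) : ι → Option κ :=
  if e ∈ E ∧ x e.1 = none ∧ #{a ∈ assignedEdges x | a.2 = e.2} < q e.2 then
    Function.update x e.1 (some e.2)
  else x

/-- The greedy procedure with `q j` slots on machine `j` and reported edges `E`, which scans the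
list `L` and starts from the assignment `x`. -/
def greedy (q : κ → ℕ) (E : Finset (ι × κ)) (L : List (ι × κ)) (x : ι → Option κ) : ι → Option κ :=
  L.foldl (greedyStep q E) x

theorem assignedEdges_greedyStep :
    assignedEdges (greedyStep q E x e) =
      if e ∈ E ∧ x e.1 = none ∧ #{a ∈ assignedEdges x | a.2 = e.2} < q e.2 then
        insert e (assignedEdges x)
      else assignedEdges x := by
  unfold greedyStep
  split_ifs with h
  exacts [assignedEdges_update h.2.1, rfl]

theorem greedyStep_of_notMem (he : e ∉ E) : greedyStep q E x e = x :=
  if_neg fun h => he h.1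

theorem greedyStep_congr (h : e ∈ E ↔ e ∈ E') : greedyStep q E x e = greedyStep q E' x e := by
  simp only [greedyStep, h]

theorem greedyStep_eq_self_or_mem (q : κ → ℕ) (E : Finset (ι × κ)) (x : ι → Option κ) (e : ι × κ) :
    greedyStep q E x e = x ∨ e ∈ assignedEdges (greedyStep q E x e) := by
  rw [assignedEdges_greedyStep]
  split_ifs with h
  exacts [.inr (mem_insert_self _ _), .inl (if_neg h)]

theorem assignedEdges_subset_greedyStep :
    assignedEdges x ⊆ assignedEdges (greedyStep q E x e) := by
  rw [assignedEdges_greedyStep]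
  split_ifs
  exacts [subset_insert _ _, Subset.rfl]

theorem assignedEdges_subset_greedy :
    assignedEdges x ⊆ assignedEdges (greedy q E L x) := by
  induction L generalizing x with
  | nil => exact Subset.rfl
  | cons e L ih => exact assignedEdges_subset_greedyStep.trans ih

theorem mem_or_of_mem_assignedEdges_greedy (ha : a ∈ assignedEdges (greedy q E L x)) :
    a ∈ assignedEdges x ∨ a ∈ L ∧ a ∈ E := by
  induction L generalizing x with
  | nil => exact .inl ha
  | cons e L ih =>
    rcases ih ha with h | h
    · rw [assignedEdges_greedyStep] at h
      split_ifs at h with he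
      · rcases mem_insert.1 h with rfl | h
        exacts [.inr ⟨List.mem_cons_self, he.1⟩, .inl h]
      · exact .inl h
    · exact .inr ⟨List.mem_cons_of_mem _ h.1, h.2⟩

theorem mem_of_mem_assignedEdges_greedy_none
    (ha : a ∈ assignedEdges (greedy q E L fun _ => none)) : a ∈ L ∧ a ∈ E :=
  (mem_or_of_mem_assignedEdges_greedy ha).resolve_left (by simp)

theorem card_filter_assignedEdges_greedyStep_le {j : κ}
    (h : #{a ∈ assignedEdges x | a.2 = j} ≤ q j) :
    #{a ∈ assignedEdges (greedyStep q E x e) | a.2 = j} ≤ q j := by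
  rw [assignedEdges_greedyStep]
  split_ifs with he
  · rw [filter_insert]
    split_ifs with hj
    · subst hj
      exact (card_insert_le _ _).trans he.2.2
    · exact h
  · exact h

theorem card_filter_assignedEdges_greedy_le {j : κ}
    (h : #{a ∈ assignedEdges x | a.2 = j} ≤ q j) :
    #{a ∈ assignedEdges (greedy q E L x) | a.2 = j} ≤ q j := by
  induction L generalizing x with
  | nil => exact h
  | cons e _ ih => exact ih (card_filter_assignedEdges_greedyStep_le h)

theorem utility_greedy_le_of_agree [AddCommMonoid R] [Preorder R] [IsOrderedAddMonoid R]
    {v : ι × κ → R} {i : ι} (hv : ∀ e, 0 ≤ v e) (hE : ∀ e, e.1 ≠ i → (e ∈ E ↔ e ∈ E'))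
    (hL : L.Pairwise fun a b => v b ≤ v a) (hx : x i = none) :
    utility v E (greedy q E' L x) i ≤ utility v E (greedy q E L x) i := by
  induction L generalizing x with
  | nil => exact le_rfl
  | cons e L ih =>
    obtain ⟨he, hL⟩ := List.pairwise_cons.1 hL
    change utility v E (greedy q E' L (greedyStep q E' x e)) i ≤
      utility v E (greedy q E L (greedyStep q E x e)) i
    by_cases hiff : e ∈ E ↔ e ∈ E'
    · rw [← greedyStep_congr hiff]
      rcases hi : greedyStep q E x e i with _ | j
      · exact ih hL hi
      · have hj : (i, j) ∈ assignedEdges (greedyStep q E x e) := mem_assignedEdges.2 hi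
        exact ((utility_of_mem_assignedEdges v E (assignedEdges_subset_greedy hj)).trans
          (utility_of_mem_assignedEdges v E (assignedEdges_subset_greedy hj)).symm).le
    obtain rfl : e.1 = i := by_contra fun h => hiff (hE e h)
    by_cases heE : e ∈ E
    · rw [greedyStep_of_notMem fun h => hiff (iff_of_true heE h)]
      rcases greedyStep_eq_self_or_mem q E x e with h | h
      · rw [h]
        exact ih hL hx
      · rw [utility_of_mem_assignedEdges v E (assignedEdges_subset_greedy h), if_pos heE]
        refine utility_le (hv e) fun a ha hai => ?_
        rcases mem_or_of_mem_assignedEdges_greedy ha with ha | ha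
        · simp [hai, hx] at ha
        · exact he a ha.1
    · rw [greedyStep_of_notMem heE]
      rcases greedyStep_eq_self_or_mem q E' x e with h | h
      · rw [h]
        exact ih hL hx
      · rw [utility_of_mem_assignedEdges v E (assignedEdges_subset_greedy h), if_neg heE]
        exact sum_nonneg fun _ _ => hv _

theorem blocked_by_job_or_machine_of_mem [Preorder R] [DecidableLE R] {v : ι × κ → R}
    (hL : L.Pairwise fun a b => v b ≤ v a)
    (heL : e ∈ L) (heE : e ∈ E) :
    (∃ a ∈ assignedEdges (greedy q E L fun _ => none), a.1 = e.1 ∧ v e ≤ v a) ∨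
      q e.2 ≤ #{a ∈ assignedEdges (greedy q E L fun _ => none) | a.2 = e.2 ∧ v e ≤ v a} := by
  obtain ⟨L₁, L₂, rfl⟩ := List.append_of_mem heL
  set x := greedy q E L₁ fun _ => none with hx
  have hgreedy : (greedy q E (L₁ ++ e :: L₂) fun _ => none) =
      greedy q E L₂ (greedyStep q E x e) := by
    simp [hx, greedy]
  have hval : ∀ a ∈ assignedEdges x, v e ≤ v a := fun a ha =>
    (List.pairwise_append.1 hL).2.2 a (mem_of_mem_assignedEdges_greedy_none ha).1 e
      List.mem_cons_self
  have hsub : assignedEdges x ⊆ assignedEdges (greedy q E L₂ (greedyStep q E x e)) :=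
    assignedEdges_subset_greedyStep.trans assignedEdges_subset_greedy
  rw [hgreedy]
  by_cases hfull : q e.2 ≤ #{a ∈ assignedEdges x | a.2 = e.2}
  · right
    refine hfull.trans (card_le_card fun a ha => ?_)
    obtain ⟨ha, hae⟩ := mem_filter.1 ha
    exact mem_filter.2 ⟨hsub ha, hae, hval a ha⟩
  left
  rcases hj : x e.1 with _ | j
  · have he : e ∈ assignedEdges (greedyStep q E x e) := by
      rw [assignedEdges_greedyStep, if_pos ⟨heE, hj, not_le.1 hfull⟩]
      exact mem_insert_self _ _
    exact ⟨e, assignedEdges_subset_greedy he, rfl, le_rfl⟩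
  · have hej : (e.1, j) ∈ assignedEdges x := mem_assignedEdges.2 hj
    exact ⟨(e.1, j), hsub hej, rfl, hval _ hej⟩

theorem sum_le_nsmul_sum_assignedEdges_greedy
    [AddCommMonoid R] [LinearOrder R] [IsOrderedCancelAddMonoid R] {v : ι × κ → R}
    (hv : ∀ e, 0 ≤ v e) (hL : L.Pairwise fun a b => v b ≤ v a) {r : ℕ} {M : Finset (ι × κ)}
    (hML : ∀ e ∈ M, e ∈ L) (hME : M ⊆ E) (hinj : Set.InjOn Prod.fst (M : Set (ι × κ)))
    (hcard : ∀ j, #{e ∈ M | e.2 = j} ≤ r * q j) :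
    ∑ e ∈ M, v e ≤ (r + 1) • ∑ e ∈ assignedEdges (greedy q E L fun _ => none), v e := by
  set A := assignedEdges (greedy q E L fun _ => none)
  have hjob : ∑ e ∈ M with ∃ a ∈ A, a.1 = e.1 ∧ v e ≤ v a, v e ≤ 1 • ∑ a ∈ A, v a := by
    refine sum_le_nsmul_sum_of_le_card_fiber hv Prod.fst (q := 1) (fun e he => ?_) fun i => ?_
    · obtain ⟨a, haA, ha⟩ := (mem_filter.1 he).2
      exact card_pos.2 ⟨a, mem_filter.2 ⟨haA, ha⟩⟩
    · refine card_le_one.2 fun a ha b hb => ?_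
      simp only [mem_filter] at ha hb
      exact hinj ha.1.1 hb.1.1 (ha.2.trans hb.2.symm)
  have hmachine : ∑ e ∈ M with ¬ ∃ a ∈ A, a.1 = e.1 ∧ v e ≤ v a, v e ≤ r • ∑ a ∈ A, v a := by
    refine sum_le_nsmul_sum_of_le_card_fiber hv Prod.snd (fun e he => ?_) fun j =>
      (card_le_card (filter_subset_filter _ (filter_subset _ _))).trans (hcard j)
    obtain ⟨heM, he⟩ := mem_filter.1 he
    exact (blocked_by_job_or_machine_of_mem hL (hML e heM) (hME heM)).resolve_left he
  rw [← sum_filter_add_sum_filter_not M fun e => ∃ a ∈ A, a.1 = e.1 ∧ v e ≤ v a, add_comm r,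
    add_nsmul]
  exact add_le_add hjob hmachine

end Greedy

section SizeClass

variable {ι κ R : Type*} [Fintype ι] [Fintype κ] [Semiring R] [LinearOrder R]
  {s : ι × κ → R} {c : κ → R} {K k : ℕ}

/-- The edges whose size, as a fraction of the capacity of their machine, is in
`(2⁻¹ ^ (k + 1), 2⁻¹ ^ k]` if `k < K`, and at most `2⁻¹ ^ K` if `k = K`. -/
def sizeClass (s : ι × κ → R) (c : κ → R) (K k : ℕ) : Finset (ι × κ) :=
  {e | 2 ^ k * s e ≤ c e.2 ∧ (k < K → c e.2 < 2 ^ (k + 1) * s e)}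

theorem mem_sizeClass {e : ι × κ} :
    e ∈ sizeClass s c K k ↔ 2 ^ k * s e ≤ c e.2 ∧ (k < K → c e.2 < 2 ^ (k + 1) * s e) := by
  simp [sizeClass]

theorem exists_mem_sizeClass {e : ι × κ} (he : s e ≤ c e.2) (K : ℕ) :
    ∃ k ≤ K, e ∈ sizeClass s c K k := by
  let k := Nat.findGreatest (fun k => 2 ^ k * s e ≤ c e.2) K
  refine ⟨k, Nat.findGreatest_le K, mem_sizeClass.2 ⟨?_, fun hk => ?_⟩⟩
  · exact Nat.findGreatest_spec (P := fun k => 2 ^ k * s e ≤ c e.2) K.zero_le (by simpa using he)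
  · exact not_le.1 (Nat.findGreatest_is_greatest k.lt_succ_self hk)

end SizeClass

section GAP

variable {n m : ℕ} {v s : Fin n × Fin m → ℝ} {c : Fin m → ℝ} {E : Finset (Fin n × Fin m)}
  {z : Fin n → Option (Fin m)} {K k : ℕ}

theorem GAPWelfare_eq_sum_assignedEdges (v : Fin n × Fin m → ℝ) (x : Fin n → Option (Fin m)) :
    GAPWelfare v x = ∑ e ∈ assignedEdges x, v e :=
  (sum_assignedEdges x v).symm

theorem GAPFeasible_iff_assignedEdges {x : Fin n → Option (Fin m)} :
    GAPFeasible s c E x ↔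
      assignedEdges x ⊆ E ∧ ∀ j, ∑ e ∈ assignedEdges x with e.2 = j, s e ≤ c j := by
  simp only [GAPFeasible, sum_assignedEdges_filter_snd, subset_iff, Prod.forall, mem_assignedEdges]

theorem GAPFeasible.size_le (hz : GAPFeasible s c E z) (hs : ∀ e, 0 ≤ s e) {e : Fin n × Fin m}
    (he : e ∈ assignedEdges z) : s e ≤ c e.2 :=
  (single_le_sum (s := {a ∈ assignedEdges z | a.2 = e.2}) (fun a _ => hs a)
    (mem_filter.2 ⟨he, rfl⟩)).trans
    ((GAPFeasible_iff_assignedEdges.1 hz).2 e.2)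

theorem GAPFeasible.card_filter_sizeClass_le (hz : GAPFeasible s c E z) (hs : ∀ e, 0 ≤ s e)
    (hc : ∀ j, 0 ≤ c j) (hn : n ≤ 2 ^ K) (hk : k ≤ K) (j : Fin m) :
    #{e ∈ assignedEdges z ∩ sizeClass s c K k | e.2 = j} ≤ 2 * 2 ^ k := by
  rcases hk.lt_or_eq with hk | rfl
  · rw [← pow_succ']
    refine card_le_of_lt_mul_of_sum_le (hc j) (f := s) (fun e he => ?_)
      ((sum_le_sum_of_subset_of_nonneg (filter_subset_filter _ inter_subset_left)
        fun a _ _ => hs a).trans ((GAPFeasible_iff_assignedEdges.1 hz).2 j))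
    obtain ⟨heM, rfl⟩ := mem_filter.1 he
    rw [Nat.cast_pow, Nat.cast_ofNat]
    exact (mem_sizeClass.1 (mem_inter.1 heM).2).2 hk
  · calc #{e ∈ assignedEdges z ∩ sizeClass s c k k | e.2 = j}
        ≤ #(assignedEdges z) := card_le_card ((filter_subset _ _).trans inter_subset_left)
      _ ≤ #(univ : Finset (Fin n)) :=
        card_le_card_of_injOn Prod.fst (by simp) (injOn_fst_assignedEdges z)
      _ ≤ 2 * 2 ^ k := by rw [card_univ, Fintype.card_fin]; omega

/-- The deterministic mechanism for the edges of size class `k`: greedy by decreasing value, with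
`2 ^ k` slots on every machine. -/
noncomputable def sizeClassGreedy (v s : Fin n × Fin m → ℝ) (c : Fin m → ℝ) (K k : ℕ)
    (E : Finset (Fin n × Fin m)) : Fin n → Option (Fin m) :=
  greedy (fun _ => 2 ^ k) E (decreasingList v (sizeClass s c K k)) fun _ => none

theorem GAPFeasible_sizeClassGreedy (hc : ∀ j, 0 ≤ c j) :
    GAPFeasible s c E (sizeClassGreedy v s c K k E) := by
  set A := assignedEdges (sizeClassGreedy v s c K k E)
  refine GAPFeasible_iff_assignedEdges.2
    ⟨fun e he => (mem_of_mem_assignedEdges_greedy_none he).2, fun j => ?_⟩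
  have hpow : (0 : ℝ) < 2 ^ k := by positivity
  have hsize : ∀ e ∈ A, s e ≤ c e.2 / 2 ^ k := fun e he =>
    (le_div_iff₀' hpow).2
      (mem_sizeClass.1 (mem_decreasingList.1 (mem_of_mem_assignedEdges_greedy_none he).1)).1
  have hcard : #{e ∈ A | e.2 = j} ≤ 2 ^ k :=
    card_filter_assignedEdges_greedy_le (q := fun _ => 2 ^ k) (by simp [assignedEdges])
  calc ∑ e ∈ A with e.2 = j, s e
      ≤ #{e ∈ A | e.2 = j} • (c j / 2 ^ k) := sum_le_card_nsmul _ _ _ fun e he => by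
        obtain ⟨heA, rfl⟩ := mem_filter.1 he
        exact hsize e heA
    _ ≤ (2 ^ k) • (c j / 2 ^ k) := nsmul_le_nsmul_left (div_nonneg (hc j) hpow.le) hcard
    _ = c j := by rw [nsmul_eq_mul]; push_cast; exact mul_div_cancel₀ _ hpow.ne'

theorem utility_sizeClassGreedy_le (hv : ∀ e, 0 ≤ v e) {i : Fin n} {Ei' : Finset (Fin n × Fin m)}
    (hEi' : ∀ e ∈ Ei', e.1 = i) :
    utility v E (sizeClassGreedy v s c K k ((E \ E.filter fun e => e.1 = i) ∪ Ei')) i ≤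
      utility v E (sizeClassGreedy v s c K k E) i := by
  refine utility_greedy_le_of_agree hv (fun e he => ?_) (pairwise_decreasingList v _) rfl
  have : e ∉ Ei' := fun h => he (hEi' e h)
  simp [he, this]

theorem sum_inter_sizeClass_le_GAPWelfare (hv : ∀ e, 0 ≤ v e) (hs : ∀ e, 0 ≤ s e)
    (hc : ∀ j, 0 ≤ c j) (hn : n ≤ 2 ^ K) (hz : GAPFeasible s c E z) (hk : k ≤ K) :
    ∑ e ∈ assignedEdges z ∩ sizeClass s c K k, v e ≤
      3 * GAPWelfare v (sizeClassGreedy v s c K k E) := by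
  rw [GAPWelfare_eq_sum_assignedEdges, ← Nat.cast_ofNat, ← nsmul_eq_mul]
  exact sum_le_nsmul_sum_assignedEdges_greedy (r := 2) hv (pairwise_decreasingList v _)
    (fun e he => mem_decreasingList.2 (mem_inter.1 he).2)
    (inter_subset_left.trans (GAPFeasible_iff_assignedEdges.1 hz).1)
    ((injOn_fst_assignedEdges z).mono (by exact_mod_cast inter_subset_left))
    (hz.card_filter_sizeClass_le hs hc hn hk)

theorem GAPFeasible.welfare_le_sum_sizeClassGreedy (hv : ∀ e, 0 ≤ v e) (hs : ∀ e, 0 ≤ s e)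
    (hc : ∀ j, 0 ≤ c j) (hn : n ≤ 2 ^ K) (hz : GAPFeasible s c E z) :
    GAPWelfare v z ≤ 3 * ∑ k ∈ range (K + 1), GAPWelfare v (sizeClassGreedy v s c K k E) := by
  have hcover : ∀ e ∈ assignedEdges z,
      v e ≤ ∑ k ∈ range (K + 1), if e ∈ sizeClass s c K k then v e else 0 := by
    intro e he
    obtain ⟨k, hk, hek⟩ := exists_mem_sizeClass (hz.size_le hs he) K
    refine le_of_eq_of_le (if_pos hek).symm (single_le_sum
      (f := fun k => if e ∈ sizeClass s c K k then v e else 0) (fun k _ => ?_)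
      (mem_range_succ_iff.2 hk))
    split_ifs
    exacts [hv e, le_rfl]
  calc GAPWelfare v z
      ≤ ∑ e ∈ assignedEdges z, ∑ k ∈ range (K + 1), if e ∈ sizeClass s c K k then v e else 0 :=
        (GAPWelfare_eq_sum_assignedEdges v z).trans_le (sum_le_sum hcover)
    _ = ∑ k ∈ range (K + 1), ∑ e ∈ assignedEdges z ∩ sizeClass s c K k, v e := by
        rw [sum_comm]
        simp only [sum_ite_mem]
    _ ≤ 3 * ∑ k ∈ range (K + 1), GAPWelfare v (sizeClassGreedy v s c K k E) := by
        rw [mul_sum]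
        exact sum_le_sum fun k hk =>
          sum_inter_sizeClass_le_GAPWelfare hv hs hc hn hz (mem_range_succ_iff.1 hk)

end GAP

/-- There is an O(log n)-approximate, truthful-in-expectation mechanism without
money for the generalized assignment problem in the private graph model. -/
theorem stmt17 :
    ∃ C : ℝ, 0 < C ∧
      ∀ (n m : ℕ), 1 ≤ n → 1 ≤ m →
      ∀ (v s : Fin n × Fin m → ℝ) (c : Fin m → ℝ),
        (∀ p, 0 ≤ v p) → (∀ p, 0 < s p) → (∀ j, 0 ≤ c j) →
        ∃ A : Finset (Fin n × Fin m) → (Fin n → Option (Fin m)) → ℝ,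
          (∀ E x, 0 ≤ A E x) ∧
          (∀ E, ∑ x : Fin n → Option (Fin m), A E x = 1) ∧
          (∀ E x, A E x ≠ 0 → GAPFeasible s c E x) ∧
          (∀ (E Ei' : Finset (Fin n × Fin m)) (i : Fin n), (∀ e ∈ Ei', e.1 = i) →
            ∑ x : Fin n → Option (Fin m),
                A ((E \ E.filter (fun e => e.1 = i)) ∪ Ei') x *
                  ∑ j ∈ Finset.univ.filter (fun j => (i, j) ∈ E ∧ x i = some j), v (i, j)
              ≤ ∑ x : Fin n → Option (Fin m),
                  A E x *
                    ∑ j ∈ Finset.univ.filter (fun j => (i, j) ∈ E ∧ x i = some j), v (i, j)) ∧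
          (∀ E z, GAPFeasible s c E z →
            GAPWelfare v z ≤
              C * (1 + Real.log n) *
                ∑ x : Fin n → Option (Fin m), A E x * GAPWelfare v x) := by
  classical
  refine ⟨6, by norm_num, fun n m _ _ v s c hv hs hc => ?_⟩
  set K := Nat.clog 2 n
  refine ⟨fun E => uniformMixture (range (K + 1)) fun k => sizeClassGreedy v s c K k E,
    fun E => uniformMixture_nonneg _ _, fun E => sum_uniformMixture nonempty_range_add_one _,
    fun E x hx => ?_, fun E Ei' i hEi' => ?_, fun E z hz => ?_⟩
  · obtain ⟨k, -, rfl⟩ := exists_eq_of_uniformMixture_ne_zero hx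
    exact GAPFeasible_sizeClassGreedy hc
  · rw [sum_uniformMixture_mul, sum_uniformMixture_mul]
    exact expect_le_expect fun k _ => utility_sizeClassGreedy_le hv hEi'
  · rw [sum_uniformMixture_mul]
    set W := 𝔼 k ∈ range (K + 1), GAPWelfare v (sizeClassGreedy v s c K k E)
    have hW : 0 ≤ W := expect_nonneg fun k _ => sum_nonneg fun i _ => sum_nonneg fun j _ => hv _
    calc GAPWelfare v z
        ≤ 3 * ∑ k ∈ range (K + 1), GAPWelfare v (sizeClassGreedy v s c K k E) :=
          hz.welfare_le_sum_sizeClassGreedy hv (fun e => (hs e).le) hc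
            (Nat.le_pow_clog one_lt_two n)
      _ = 3 * ((K + 1) * W) := by
          rw [← card_mul_expect, card_range, Nat.cast_succ]
      _ ≤ 3 * (2 * (1 + Real.log n) * W) := by gcongr; exact clog_two_add_one_le_log n
      _ = 6 * (1 + Real.log n) * W := by ring
end
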